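/- Assume 0 < σ < ∞ if N ≤ 4 and 0 < σ < 4/(N-4) if N ≥ 5. The mapping c ↦ t(c) is strictly increasing on (0,∞), and there exists C > 0 such that t(c) ≤ C√c for all sufficiently small c > 0; in particular t(c) → 0 as c → 0. -/

import Mathlib

open MeasureTheory Filter Topology

noncomputable section

abbrev Esp (N : ℕ) := EuclideanSpace ℝ (Fin N)

/-- Smooth compactly supported test functions. -/
def TestFun {N : ℕ} (φ : Esp N → ℂ) : Prop :=
  ContDiff ℝ (⊤ : ℕ∞) φ ∧ HasCompactSupport φ

/-- Partial derivative in the `i`-th coordinate direction. -/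
def pderivC {N : ℕ} (i : Fin N) (φ : Esp N → ℂ) : Esp N → ℂ :=
  fun x => fderiv ℝ φ x (EuclideanSpace.single i (1 : ℝ))

/-- The Laplacian of a (smooth) function. -/
def lapC {N : ℕ} (φ : Esp N → ℂ) : Esp N → ℂ :=
  fun x => ∑ i, pderivC i (pderivC i φ) x

/-- `v` is the weak `i`-th partial derivative of `u`. -/
def IsWeakPDeriv {N : ℕ} (u : Esp N → ℂ) (i : Fin N) (v : Esp N → ℂ) : Prop :=
  ∀ φ : Esp N → ℂ, TestFun φ → ∫ x, u x * pderivC i φ x = - ∫ x, v x * φ x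

/-- `v` is the weak Laplacian of `u`. -/
def IsWeakLap {N : ℕ} (u v : Esp N → ℂ) : Prop :=
  ∀ φ : Esp N → ℂ, TestFun φ → ∫ x, u x * lapC φ x = ∫ x, v x * φ x

/-- An element of the Sobolev space `H²(ℝ^N, ℂ)`: an `L²` function together with its
weak partial derivatives and its weak Laplacian, all in `L²`. -/
structure H2 (N : ℕ) where
  u : Esp N → ℂ
  grad : Fin N → Esp N → ℂ
  lapl : Esp N → ℂ
  u_mem : MemLp u 2 (volume : Measure (Esp N))
  grad_mem : ∀ i, MemLp (grad i) 2 (volume : Measure (Esp N))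
  lapl_mem : MemLp lapl 2 (volume : Measure (Esp N))
  grad_spec : ∀ i, IsWeakPDeriv u i (grad i)
  lapl_spec : IsWeakLap u lapl

namespace H2

variable {N : ℕ}

/-- `∫ |u|²`. -/
def massSq (U : H2 N) : ℝ := ∫ x, ‖U.u x‖ ^ 2

/-- `∫ |∇u|²`. -/
def gradSq (U : H2 N) : ℝ := ∑ i, ∫ x, ‖U.grad i x‖ ^ 2

/-- `∫ |Δu|²`. -/
def lapSq (U : H2 N) : ℝ := ∫ x, ‖U.lapl x‖ ^ 2

/-- `∫ |u|^{2σ+2}`. -/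
def pPow (σ : ℝ) (U : H2 N) : ℝ := ∫ x, ‖U.u x‖ ^ (2 * σ + 2)

/-- The energy `E(u) = ∫|Δu|² - 2∫|∇u|² - (1/(σ+1))∫|u|^{2σ+2}`. -/
def energy (σ : ℝ) (U : H2 N) : ℝ :=
  U.lapSq - 2 * U.gradSq - (1 / (σ + 1)) * U.pPow σ

/-- The square of the `H²` norm. -/
def h2NormSq (U : H2 N) : ℝ := U.massSq + U.gradSq + U.lapSq

/-- `u` does not vanish almost everywhere. -/
def Nontriv (U : H2 N) : Prop := ¬ (U.u =ᵐ[(volume : Measure (Esp N))] 0)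

end H2

/-- `E_min(m) = inf {E(u) : u ∈ H², ∫|u|² = m}`, with values in `EReal`. -/
def EminE (N : ℕ) (σ m : ℝ) : EReal :=
  ⨅ (U : H2 N) (_ : U.massSq = m), ((U.energy σ : ℝ) : EReal)

/-- The `L^p` norm (as a real number) of a function on `ℝ^N`. -/
def rLp {N : ℕ} (p : ℝ) (f : Esp N → ℂ) : ℝ :=
  (eLpNorm f (ENNReal.ofReal p) (volume : Measure (Esp N))).toReal


/-- The best constant `B(N,σ)` in the Gagliardo–Nirenberg–Sobolev inequality
`‖u‖_{L^{2σ+2}}^{2σ+2} ≤ B ‖Δu‖_{L²}^{Nσ/2} ‖u‖_{L²}^{2+2σ-Nσ/2}`. -/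
def GNconst (N : ℕ) (σ : ℝ) : ℝ :=
  sSup {r : ℝ | ∃ U : H2 N, U.Nontriv ∧
    r = U.pPow σ /
      (rLp 2 U.lapl ^ ((N : ℝ) * σ / 2) * rLp 2 U.u ^ (2 + 2 * σ - (N : ℝ) * σ / 2))}

/-- `k* = (σ+1)^{1/σ} B(N,σ)^{-1/σ}`. -/
def kstar (N : ℕ) (σ : ℝ) : ℝ := (σ + 1) ^ (1 / σ) * GNconst N σ ^ (-(1 / σ))

/-- Strong `H²` convergence of `v k (· + xs k)` to `U`. -/
def H2TendstoTrans {N : ℕ} (v : ℕ → H2 N) (xs : ℕ → Esp N) (U : H2 N) : Prop :=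
  Tendsto (fun k => eLpNorm (fun x => (v k).u (x + xs k) - U.u x) 2
      (volume : Measure (Esp N))) atTop (nhds 0) ∧
  (∀ i, Tendsto (fun k => eLpNorm (fun x => (v k).grad i (x + xs k) - U.grad i x) 2
      (volume : Measure (Esp N))) atTop (nhds 0)) ∧
  Tendsto (fun k => eLpNorm (fun x => (v k).lapl (x + xs k) - U.lapl x) 2
      (volume : Measure (Esp N))) atTop (nhds 0)

/-- `u` is a weak (`H^{-2}`) solution of `Δ²u + 2Δu + (1+c)u - |u|^{2σ}u = 0`. -/
def SolvesSW {N : ℕ} (σ c : ℝ) (U : H2 N) : Prop :=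
  ∀ φ : Esp N → ℂ, TestFun φ →
    (∫ x, U.lapl x * lapC φ x) + 2 * (∫ x, U.lapl x * φ x) +
        ((1 + c : ℝ) : ℂ) * (∫ x, U.u x * φ x) -
        (∫ x, ((‖U.u x‖ ^ (2 * σ) : ℝ) : ℂ) * U.u x * φ x) = 0

/-- `T_c(u) = ∫|Δu|² - 2∫|∇u|² + (1+c)∫|u|²`. -/
def Tfun {N : ℕ} (c : ℝ) (U : H2 N) : ℝ := U.lapSq - 2 * U.gradSq + (1 + c) * U.massSq

/-- `t(c) = inf {T_c(u) : ∫|u|^{2σ+2} = 1}`. -/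
def tmin (N : ℕ) (σ c : ℝ) : ℝ := sInf {r : ℝ | ∃ U : H2 N, U.pPow σ = 1 ∧ r = Tfun c U}

/-- The action `S_c(u) = E(u) + (1+c)‖u‖_{L²}² = T_c(u) - (1/(σ+1))∫|u|^{2σ+2}`. -/
def action {N : ℕ} (σ c : ℝ) (U : H2 N) : ℝ := U.energy σ + (1 + c) * U.massSq

/-!
By Plancherel, `T_c(u) = ∫ (((2π‖ξ‖)² - 1)² + c) ‖û(ξ)‖² dξ`, so for `c > 0` the functional `T_c`
controls `∫|u|²` and `∫|Δu|²`.

Strict monotonicity comes from a uniform lower bound on the mass of near-minimizers: as `2σ + 2` is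
subcritical for `H²`, the part of `u` with frequencies above `R` is small in `L^{2σ+2}` for large
`R` by the bound on `∫|Δu|²`, while the part below `R` is bounded in `L^{2σ+2}` by the mass. Since
`∫|u|^{2σ+2} = 1`, the mass is at least some `m > 0`, so a near-minimizer `u` for `d > c` has
`T_c(u) = T_d(u) - (d - c) ∫|u|² ≤ t(d) - (d - c) m / 2`.

For the bound `t(c) ≤ C√c`, the symbol `((2π‖ξ‖)² - 1)²` is `O(δ²)` on the shell
`1 ≤ 2π‖ξ‖ ≤ 1 + δ`, whose volume is at least of order `δ`. The inverse Fourier transform of its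
indicator function is at least half that volume on a fixed ball, so after normalization its `T_c` is
`O((δ² + c) / δ)`, and `δ = √c` is the optimal choice.
-/

open scoped ENNReal ContDiff LineDeriv FourierTransform SchwartzMap Laplacian

section CompactSupport

variable {E F : Type*} [NormedAddCommGroup E] [NormedSpace ℝ E]
  [NormedAddCommGroup F] [NormedSpace ℝ F]

lemma norm_iteratedFDeriv_dilation_le {h : E → F} (hh : ContDiff ℝ ∞ h)
    (hzero : ∀ y ∈ Metric.ball (0 : E) 1, h y = 0) {i : ℕ} {C : ℝ}
    (hC : ∀ y, ‖iteratedFDeriv ℝ i h y‖ ≤ C) {R : ℝ} (hR : 1 ≤ R) (x : E) :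
    ‖iteratedFDeriv ℝ i (fun y => h (R⁻¹ • y)) x‖ ≤ C * (‖x‖ / R) := by
  have hC0 : 0 ≤ C := (norm_nonneg _).trans (hC 0)
  have hR0 : 0 < R := zero_lt_one.trans_le hR
  have hnorm : ‖R⁻¹ • x‖ = ‖x‖ / R := by
    rw [norm_smul, norm_inv, Real.norm_of_nonneg hR0.le, inv_mul_eq_div]
  rw [iteratedFDeriv_comp_const_smul R⁻¹ (hh.of_le (mod_cast le_top)), norm_smul]
  by_cases hx : ‖R⁻¹ • x‖ < 1
  · have h0 : h =ᶠ[𝓝 (R⁻¹ • x)] 0 :=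
      eventually_of_mem (Metric.isOpen_ball.mem_nhds (mem_ball_zero_iff.2 hx)) hzero
    rw [(h0.iteratedFDeriv ℝ i).eq_of_nhds, Pi.zero_def, iteratedFDeriv_fun_zero,
      Pi.zero_apply, norm_zero, mul_zero]
    positivity
  · have hpow : ‖R⁻¹ ^ i‖ ≤ 1 := by
      rw [norm_pow, norm_inv, Real.norm_of_nonneg hR0.le]
      exact pow_le_one₀ (by positivity) (inv_le_one_of_one_le₀ hR)
    calc ‖R⁻¹ ^ i‖ * ‖iteratedFDeriv ℝ i h (R⁻¹ • x)‖ ≤ 1 * C := by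
          gcongr
          exact hC _
      _ ≤ C * (‖x‖ / R) := by
          rw [one_mul, ← hnorm]
          exact le_mul_of_one_le_right hC0 (not_lt.1 hx)

lemma exists_norm_iteratedFDeriv_sub_const_le {χ : E → F} (hχ : ContDiff ℝ ∞ χ)
    (hcs : HasCompactSupport χ) (c : F) (i : ℕ) :
    ∃ C : ℝ, ∀ y, ‖iteratedFDeriv ℝ i (fun y => χ y - c) y‖ ≤ C := by
  obtain ⟨C, hC⟩ := (hcs.iteratedFDeriv (𝕜 := ℝ) i).exists_bound_of_continuous
    (hχ.continuous_iteratedFDeriv (mod_cast le_top))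
  obtain ⟨D, hD⟩ : ∃ D : ℝ, ∀ y : E, ‖iteratedFDeriv ℝ i (fun _ => c) y‖ ≤ D := by
    rcases i.eq_zero_or_pos with rfl | hi
    · exact ⟨‖c‖, fun y => by rw [norm_iteratedFDeriv_zero]⟩
    · exact ⟨0, fun y => by simp [iteratedFDeriv_const_of_ne hi.ne']⟩
  refine ⟨C + D, fun y => ?_⟩
  rw [fun_iteratedFDeriv_sub (hχ.of_le (mod_cast le_top)) contDiff_const]
  exact (norm_sub_le _ _).trans (add_le_add (hC y) (hD y))

lemma seminorm_smulLeftCLM_dilation_le {h : E → ℝ} (hh : h.HasTemperateGrowth)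
    (hzero : ∀ y ∈ Metric.ball (0 : E) 1, h y = 0) {C : ℕ → ℝ}
    (hC : ∀ i y, ‖iteratedFDeriv ℝ i h y‖ ≤ C i) (f : 𝓢(E, F)) (k n : ℕ) {R : ℝ} (hR : 1 ≤ R) :
    SchwartzMap.seminorm ℝ k n (SchwartzMap.smulLeftCLM F (fun y => h (R⁻¹ • y)) f)
      ≤ (∑ i ∈ Finset.range (n + 1),
        (n.choose i : ℝ) * C i * SchwartzMap.seminorm ℝ (k + 1) (n - i) f) / R := by
  have hC_nonneg : ∀ i, 0 ≤ C i := fun i => (norm_nonneg _).trans (hC i 0)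
  have hdil : Function.HasTemperateGrowth (fun y => h (R⁻¹ • y)) := hh.comp (by fun_prop)
  have hK : 0 ≤ ∑ i ∈ Finset.range (n + 1),
      (n.choose i : ℝ) * C i * SchwartzMap.seminorm ℝ (k + 1) (n - i) f :=
    Finset.sum_nonneg fun i _ => by have := hC_nonneg i; positivity
  refine SchwartzMap.seminorm_le_bound ℝ k n _ (div_nonneg hK (by positivity)) fun x => ?_
  rw [SchwartzMap.smulLeftCLM_apply hdil]
  calc ‖x‖ ^ k * ‖iteratedFDeriv ℝ n (fun y => h (R⁻¹ • y) • f y) x‖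
      ≤ ‖x‖ ^ k * ∑ i ∈ Finset.range (n + 1), (n.choose i : ℝ) *
          ‖iteratedFDeriv ℝ i (fun y => h (R⁻¹ • y)) x‖ * ‖iteratedFDeriv ℝ (n - i) f x‖ := by
        gcongr
        exact norm_iteratedFDeriv_smul_le hdil.1 (f.smooth ⊤) x (mod_cast le_top)
    _ ≤ ‖x‖ ^ k * ∑ i ∈ Finset.range (n + 1), (n.choose i : ℝ) *
          (C i * (‖x‖ / R)) * ‖iteratedFDeriv ℝ (n - i) f x‖ := by
        gcongr with i
        exact norm_iteratedFDeriv_dilation_le hh.1 hzero (hC i) hR x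
    _ = ∑ i ∈ Finset.range (n + 1), (n.choose i : ℝ) * C i *
          (‖x‖ ^ (k + 1) * ‖iteratedFDeriv ℝ (n - i) f x‖) / R := by
        rw [Finset.mul_sum]
        exact Finset.sum_congr rfl fun i _ => by ring
    _ ≤ ∑ i ∈ Finset.range (n + 1),
          (n.choose i : ℝ) * C i * SchwartzMap.seminorm ℝ (k + 1) (n - i) f / R := by
        gcongr with i
        · exact mul_nonneg (Nat.cast_nonneg _) (hC_nonneg i)
        · exact SchwartzMap.le_seminorm ℝ (k + 1) (n - i) f x
    _ = _ := (Finset.sum_div _ _ _).symm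

lemma tendsto_smulLeftCLM_dilation_zero {h : E → ℝ} (hh : h.HasTemperateGrowth)
    (hzero : ∀ y ∈ Metric.ball (0 : E) 1, h y = 0)
    (hbdd : ∀ i, ∃ C : ℝ, ∀ y, ‖iteratedFDeriv ℝ i h y‖ ≤ C) (f : 𝓢(E, F)) :
    Tendsto (fun R : ℝ => SchwartzMap.smulLeftCLM F (fun y => h (R⁻¹ • y)) f) atTop (𝓝 0) := by
  choose C hC using hbdd
  rw [(schwartz_withSeminorms ℝ E F).tendsto_nhds]
  rintro ⟨k, n⟩ ε hε
  have hlim := (tendsto_id (α := ℝ)).const_div_atTop (∑ i ∈ Finset.range (n + 1),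
    (n.choose i : ℝ) * C i * SchwartzMap.seminorm ℝ (k + 1) (n - i) f)
  filter_upwards [hlim.eventually_lt_const hε, eventually_ge_atTop 1] with R hRε hR
  rw [sub_zero]
  exact (seminorm_smulLeftCLM_dilation_le hh hzero hC f k n hR).trans_lt hRε

lemma dense_setOf_schwartzMap_hasCompactSupport [HasContDiffBump E] [FiniteDimensional ℝ E] :
    Dense {f : 𝓢(E, F) | HasCompactSupport f} := by
  intro f
  let χ : ContDiffBump (0 : E) := ⟨1, 2, one_pos, one_lt_two⟩
  have hχ : Function.HasTemperateGrowth χ := χ.hasCompactSupport.hasTemperateGrowth χ.contDiff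
  have hdil : ∀ R : ℝ, Function.HasTemperateGrowth (fun y : E => χ (R⁻¹ • y)) :=
    fun R => hχ.comp (by fun_prop)
  have hzero : Tendsto (fun R : ℝ => SchwartzMap.smulLeftCLM F (fun y => χ (R⁻¹ • y) - 1) f)
      atTop (𝓝 0) :=
    tendsto_smulLeftCLM_dilation_zero (h := fun y => χ y - 1) (hχ.sub (.const 1))
      (fun y hy => sub_eq_zero.2 (χ.one_of_mem_closedBall (Metric.ball_subset_closedBall hy)))
      (exists_norm_iteratedFDeriv_sub_const_le χ.contDiff χ.hasCompactSupport 1) f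
  have hlim : Tendsto (fun R : ℝ => SchwartzMap.smulLeftCLM F (fun y => χ (R⁻¹ • y)) f)
      atTop (𝓝 f) := by
    rw [← tendsto_sub_nhds_zero_iff]
    refine hzero.congr fun R => ?_
    ext x
    rw [SchwartzMap.smulLeftCLM_apply_apply ((hdil R).fun_sub (.const 1)), sub_apply,
      SchwartzMap.smulLeftCLM_apply_apply (hdil R), sub_smul, one_smul]
  refine mem_closure_of_tendsto hlim ((eventually_gt_atTop 0).mono fun R hR => ?_)
  have hcs : HasCompactSupport (fun y : E => χ (R⁻¹ • y)) :=
    χ.hasCompactSupport.comp_smul (inv_ne_zero hR.ne')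
  rw [Set.mem_ofPred_eq, SchwartzMap.smulLeftCLM_apply (hdil R)]
  exact hcs.smul_right

end CompactSupport

section FourierL2

variable {E F : Type*} [NormedAddCommGroup E] [InnerProductSpace ℝ E] [FiniteDimensional ℝ E]
  [MeasurableSpace E] [BorelSpace E]

lemma ae_eq_of_integral_schwartzMap_smul_eq [NormedAddCommGroup F] [NormedSpace ℂ F]
    [CompleteSpace F] {μ : Measure E} {f g : E → F} (hf : LocallyIntegrable f μ)
    (hg : LocallyIntegrable g μ)
    (h : ∀ φ : 𝓢(E, ℂ), ∫ x, φ x • f x ∂μ = ∫ x, φ x • g x ∂μ) : f =ᵐ[μ] g := by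
  refine ae_eq_of_integral_contDiff_smul_eq hf hg fun φ hφ hφc => ?_
  have hφc' : HasCompactSupport (Complex.ofRealCLM ∘ φ) := hφc.comp_left rfl
  have hφ' : ContDiff ℝ ∞ (Complex.ofRealCLM ∘ φ) := by fun_prop
  simpa using h (hφc'.toSchwartzMap hφ')

variable [NormedAddCommGroup F] [InnerProductSpace ℂ F] [CompleteSpace F]

lemma smulLeftCLM_toTemperedDistribution_eq_iff {g : E → ℂ} (hg : g.HasTemperateGrowth)
    (u v : Lp (α := E) F 2) :
    TemperedDistribution.smulLeftCLM F g (u : 𝓢'(E, F)) = v ↔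
      v =ᵐ[volume] fun ξ => g ξ • u ξ := by
  have hu := (Lp.memLp u).locallyIntegrable (by norm_num)
  have hv := (Lp.memLp v).locallyIntegrable (by norm_num)
  have hgu : ∀ φ : 𝓢(E, ℂ), TemperedDistribution.smulLeftCLM F g (u : 𝓢'(E, F)) φ
      = ∫ ξ, φ ξ • g ξ • u ξ := fun φ => by
    rw [TemperedDistribution.smulLeftCLM_apply_apply, Lp.toTemperedDistribution_apply]
    simp only [SchwartzMap.smulLeftCLM_apply_apply hg, smul_eq_mul, mul_comm (g _), mul_smul]
  refine ⟨fun h => ?_, fun h => ?_⟩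
  · refine ae_eq_of_integral_schwartzMap_smul_eq hv (hu.continuous_smul hg.1.continuous)
      fun φ => ?_
    rw [← hgu, h, Lp.toTemperedDistribution_apply]
  · ext φ
    rw [hgu, Lp.toTemperedDistribution_apply]
    refine integral_congr_ae (h.mono fun ξ hξ => ?_)
    simp only [hξ]

lemma lineDerivOp_toTemperedDistribution_eq_iff (m : E) (u v : Lp (α := E) F 2) :
    ∂_{m} (u : 𝓢'(E, F)) = v ↔ (𝓕 v : Lp (α := E) F 2) =ᵐ[volume]
      fun ξ => (2 * Real.pi * Complex.I * (inner ℝ ξ m : ℝ)) • (𝓕 u : Lp (α := E) F 2) ξ := by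
  have hm : Function.HasTemperateGrowth fun ξ : E => ((inner ℝ ξ m : ℝ) : ℂ) := by fun_prop
  rw [← (FourierTransform.fourierEquiv ℂ 𝓢'(E, F)).injective.eq_iff,
    FourierTransform.fourierEquiv_apply, FourierTransform.fourierEquiv_apply,
    TemperedDistribution.fourier_lineDerivOp_eq, Lp.fourier_toTemperedDistribution_eq,
    Lp.fourier_toTemperedDistribution_eq, ← smul_apply,
    ← TemperedDistribution.smulLeftCLM_smul hm,
    smulLeftCLM_toTemperedDistribution_eq_iff (by fun_prop)]
  rfl

lemma laplacian_toTemperedDistribution_eq_iff (u v : Lp (α := E) F 2) :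
    Δ (u : 𝓢'(E, F)) = v ↔ (𝓕 v : Lp (α := E) F 2) =ᵐ[volume]
      fun ξ => (-(2 * Real.pi * ‖ξ‖) ^ 2 : ℂ) • (𝓕 u : Lp (α := E) F 2) ξ := by
  have hsq : Function.HasTemperateGrowth fun ξ : E => ((‖ξ‖ ^ 2 : ℝ) : ℂ) := by fun_prop
  rw [← (FourierTransform.fourierEquiv ℂ 𝓢'(E, F)).injective.eq_iff,
    FourierTransform.fourierEquiv_apply, FourierTransform.fourierEquiv_apply,
    TemperedDistribution.laplacian_eq_fourierMultiplierCLM,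
    TemperedDistribution.fourierMultiplierCLM_apply, ← Complex.coe_smul,
    FourierTransform.fourier_smul, FourierTransform.fourier_fourierInv_eq,
    Lp.fourier_toTemperedDistribution_eq, Lp.fourier_toTemperedDistribution_eq, ← smul_apply,
    ← TemperedDistribution.smulLeftCLM_smul hsq,
    smulLeftCLM_toTemperedDistribution_eq_iff (by fun_prop)]
  simp [mul_pow]

lemma coeFn_fourierInv_ae_eq (f : Lp (α := E) F 2) (hf : Integrable f) :
    (𝓕⁻ f : Lp (α := E) F 2) =ᵐ[volume] 𝓕⁻ (f : E → F) := by
  have hL : Continuous fun p : E × E => (-innerₗ E) p.1 p.2 := continuous_inner.neg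
  have hcont : Continuous (𝓕⁻ (f : E → F)) :=
    VectorFourier.fourierIntegral_continuous Real.continuous_fourierChar hL hf
  have hflip : (-innerₗ E).flip = -innerₗ E :=
    LinearMap.ext₂ fun x y => by simp [real_inner_comm]
  refine ae_eq_of_integral_schwartzMap_smul_eq
    ((Lp.memLp _).locallyIntegrable (by norm_num)) hcont.locallyIntegrable fun φ => ?_
  have hself := VectorFourier.integral_fourierIntegral_smul_eq_flip
    Real.continuous_fourierChar hL (φ.integrable (μ := volume)) hf
  rw [hflip] at hself
  rw [← Lp.toTemperedDistribution_apply, ← Lp.fourierInv_toTemperedDistribution_eq,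
    TemperedDistribution.fourierInv_apply, Lp.toTemperedDistribution_apply,
    SchwartzMap.fourierInv_coe]
  exact hself

end FourierL2

section WeakDerivative

lemma temperedDistribution_ext_of_hasCompactSupport {E F : Type*} [NormedAddCommGroup E]
    [NormedSpace ℝ E] [HasContDiffBump E] [FiniteDimensional ℝ E] [NormedAddCommGroup F]
    [NormedSpace ℂ F] {S T : 𝓢'(E, F)}
    (h : ∀ φ : 𝓢(E, ℂ), HasCompactSupport φ → S φ = T φ) : S = T :=
  DFunLike.coe_injective <| Continuous.ext_on dense_setOf_schwartzMap_hasCompactSupport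
    (map_continuous S) (map_continuous T) h

variable {N : ℕ} {u v : Esp N → ℂ}

lemma forall_testFun_iff_forall_schwartzMap {P : (Esp N → ℂ) → Prop} :
    (∀ φ, TestFun φ → P φ) ↔ ∀ φ : 𝓢(Esp N, ℂ), HasCompactSupport φ → P φ :=
  ⟨fun h φ hφ => h _ ⟨φ.smooth ⊤, hφ⟩, fun h _ hφ => h (hφ.2.toSchwartzMap hφ.1) hφ.2⟩

lemma pderivC_eq_lineDerivOp (i : Fin N) (φ : 𝓢(Esp N, ℂ)) :
    pderivC i φ = ∂_{EuclideanSpace.single i (1 : ℝ)} φ :=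
  funext fun x => (SchwartzMap.lineDerivOp_apply_eq_fderiv _ φ x).symm

lemma lapC_eq_laplacian (φ : 𝓢(Esp N, ℂ)) : lapC φ = Δ φ := by
  ext x
  rw [SchwartzMap.laplacian_eq_sum (EuclideanSpace.basisFun (Fin N) ℝ)]
  simp only [lapC, pderivC_eq_lineDerivOp, EuclideanSpace.basisFun_apply, sum_apply]

lemma toTemperedDistribution_toLp_apply (hu : MemLp u 2 volume) (φ : 𝓢(Esp N, ℂ)) :
    (hu.toLp u : 𝓢'(Esp N, ℂ)) φ = ∫ x, u x * φ x := by
  rw [Lp.toTemperedDistribution_apply]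
  refine integral_congr_ae (hu.coeFn_toLp.mono fun x hx => ?_)
  simp only [hx, smul_eq_mul, mul_comm]

lemma isWeakPDeriv_iff_lineDerivOp_eq (hu : MemLp u 2 volume) (hv : MemLp v 2 volume)
    (i : Fin N) : IsWeakPDeriv u i v ↔
      ∂_{EuclideanSpace.single i (1 : ℝ)} (hu.toLp u : 𝓢'(Esp N, ℂ)) = hv.toLp v := by
  have hiff : ∀ φ : 𝓢(Esp N, ℂ), (∫ x, u x * pderivC i φ x = -∫ x, v x * φ x) ↔
      (∂_{EuclideanSpace.single i (1 : ℝ)} (hu.toLp u : 𝓢'(Esp N, ℂ))) φ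
        = (hv.toLp v : 𝓢'(Esp N, ℂ)) φ := fun φ => by
    rw [TemperedDistribution.lineDerivOp_apply_apply, map_neg, neg_eq_iff_eq_neg,
      toTemperedDistribution_toLp_apply, toTemperedDistribution_toLp_apply,
      pderivC_eq_lineDerivOp]
  rw [IsWeakPDeriv, forall_testFun_iff_forall_schwartzMap]
  simp only [hiff]
  exact ⟨temperedDistribution_ext_of_hasCompactSupport, fun h φ _ => by rw [h]⟩

lemma isWeakLap_iff_laplacian_eq (hu : MemLp u 2 volume) (hv : MemLp v 2 volume) :
    IsWeakLap u v ↔ Δ (hu.toLp u : 𝓢'(Esp N, ℂ)) = hv.toLp v := by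
  have hiff : ∀ φ : 𝓢(Esp N, ℂ), (∫ x, u x * lapC φ x = ∫ x, v x * φ x) ↔
      (Δ (hu.toLp u : 𝓢'(Esp N, ℂ))) φ = (hv.toLp v : 𝓢'(Esp N, ℂ)) φ := fun φ => by
    rw [TemperedDistribution.laplacian_apply_apply, toTemperedDistribution_toLp_apply,
      toTemperedDistribution_toLp_apply, lapC_eq_laplacian]
  rw [IsWeakLap, forall_testFun_iff_forall_schwartzMap]
  simp only [hiff]
  exact ⟨temperedDistribution_ext_of_hasCompactSupport, fun h φ _ => by rw [h]⟩

end WeakDerivative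

section Plancherel

lemma integral_norm_rpow_eq_lpNorm_rpow {α F : Type*} [MeasurableSpace α] {μ : Measure α}
    [NormedAddCommGroup F] {f : α → F} (hf : AEStronglyMeasurable f μ) {p : ℝ} (hp : 0 < p) :
    ∫ x, ‖f x‖ ^ p ∂μ = lpNorm f (ENNReal.ofReal p) μ ^ p := by
  rw [lpNorm_eq_integral_norm_rpow_toReal (by simpa using hp) ENNReal.ofReal_ne_top hf,
    ENNReal.toReal_ofReal hp.le, Real.rpow_inv_rpow (integral_nonneg fun x => by positivity) hp.ne']

lemma integral_norm_sq_eq_lpNorm_sq {α F : Type*} [MeasurableSpace α] {μ : Measure α}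
    [NormedAddCommGroup F] {f : α → F} (hf : AEStronglyMeasurable f μ) :
    ∫ x, ‖f x‖ ^ 2 ∂μ = lpNorm f 2 μ ^ 2 := by
  have h := integral_norm_rpow_eq_lpNorm_rpow hf two_pos
  simpa only [Real.rpow_two, ENNReal.ofReal_ofNat] using h

lemma eLpNorm_two_eq_ofReal_sqrt {α F : Type*} [MeasurableSpace α] {μ : Measure α}
    [NormedAddCommGroup F] {f : α → F} (hf : MemLp f 2 μ) :
    eLpNorm f 2 μ = ENNReal.ofReal √(∫ x, ‖f x‖ ^ 2 ∂μ) := by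
  rw [integral_norm_sq_eq_lpNorm_sq hf.1, Real.sqrt_sq lpNorm_nonneg, ofReal_lpNorm hf]

lemma integrable_and_integral_norm_sq_eq_of_fourier_ae_eq {E : Type*} [NormedAddCommGroup E]
    [InnerProductSpace ℝ E] [FiniteDimensional ℝ E] [MeasurableSpace E] [BorelSpace E]
    {v w : E → ℂ} (hv : MemLp v 2 volume)
    (hw : (𝓕 (hv.toLp v) : Lp ℂ 2 (volume : Measure E)) =ᵐ[volume] w) :
    Integrable (fun ξ => ‖w ξ‖ ^ 2) ∧ ∫ x, ‖v x‖ ^ 2 = ∫ ξ, ‖w ξ‖ ^ 2 := by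
  have hw2 : MemLp w 2 volume := (memLp_congr_ae hw).1 (Lp.memLp _)
  refine ⟨hw2.norm.integrable_sq, ?_⟩
  rw [integral_norm_sq_eq_lpNorm_sq hv.1, integral_norm_sq_eq_lpNorm_sq hw2.1,
    ← toReal_eLpNorm hv.1, ← toReal_eLpNorm hw2.1, ← eLpNorm_congr_ae hw, ← Lp.norm_def,
    Lp.norm_fourier_eq, Lp.norm_toLp]

end Plancherel

namespace H2

variable {N : ℕ}

/-- The `L²` Fourier transform of an element of `H²(ℝ^N)`, in the normalisation
`∫ e^{-2πi⟨x,ξ⟩} u(x) dx` for which the Laplacian becomes multiplication by `-(2π‖ξ‖)²`. -/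
def fourier (U : H2 N) : Lp ℂ 2 (volume : Measure (Esp N)) := 𝓕 (U.u_mem.toLp U.u)

lemma fourier_grad_ae_eq (U : H2 N) (i : Fin N) :
    (𝓕 ((U.grad_mem i).toLp (U.grad i)) : Lp ℂ 2 (volume : Measure (Esp N))) =ᵐ[volume]
      fun ξ => (2 * Real.pi * Complex.I * (ξ i : ℝ)) * U.fourier ξ := by
  have h := (lineDerivOp_toTemperedDistribution_eq_iff _ _ _).1
    ((isWeakPDeriv_iff_lineDerivOp_eq U.u_mem (U.grad_mem i) i).1 (U.grad_spec i))
  simpa only [EuclideanSpace.inner_single_right, conj_trivial, one_mul, smul_eq_mul] using! h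

lemma fourier_lapl_ae_eq (U : H2 N) :
    (𝓕 (U.lapl_mem.toLp U.lapl) : Lp ℂ 2 (volume : Measure (Esp N))) =ᵐ[volume]
      fun ξ => (-(2 * Real.pi * ‖ξ‖) ^ 2 : ℂ) * U.fourier ξ :=
  (laplacian_toTemperedDistribution_eq_iff _ _).1
    ((isWeakLap_iff_laplacian_eq U.u_mem U.lapl_mem).1 U.lapl_spec)

lemma integrable_norm_fourier_sq (U : H2 N) : Integrable fun ξ => ‖U.fourier ξ‖ ^ 2 :=
  (integrable_and_integral_norm_sq_eq_of_fourier_ae_eq U.u_mem EventuallyEq.rfl).1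

lemma massSq_eq_integral (U : H2 N) : U.massSq = ∫ ξ, ‖U.fourier ξ‖ ^ 2 :=
  (integrable_and_integral_norm_sq_eq_of_fourier_ae_eq U.u_mem EventuallyEq.rfl).2

lemma integrable_and_lapSq_eq_integral (U : H2 N) :
    Integrable (fun ξ => ((2 * Real.pi * ‖ξ‖) ^ 2) ^ 2 * ‖U.fourier ξ‖ ^ 2) ∧
      U.lapSq = ∫ ξ, ((2 * Real.pi * ‖ξ‖) ^ 2) ^ 2 * ‖U.fourier ξ‖ ^ 2 := by
  have h := integrable_and_integral_norm_sq_eq_of_fourier_ae_eq U.lapl_mem U.fourier_lapl_ae_eq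
  have hnorm : ∀ ξ : Esp N, ‖(-(2 * Real.pi * ‖ξ‖) ^ 2 : ℂ) * U.fourier ξ‖ ^ 2
      = ((2 * Real.pi * ‖ξ‖) ^ 2) ^ 2 * ‖U.fourier ξ‖ ^ 2 := fun ξ => by
    rw [norm_mul, mul_pow, norm_neg]
    norm_num [abs_of_pos Real.pi_pos]
  simp only [hnorm] at h
  exact h

lemma integrable_and_gradSq_eq_integral (U : H2 N) :
    Integrable (fun ξ => (2 * Real.pi * ‖ξ‖) ^ 2 * ‖U.fourier ξ‖ ^ 2) ∧
      U.gradSq = ∫ ξ, (2 * Real.pi * ‖ξ‖) ^ 2 * ‖U.fourier ξ‖ ^ 2 := by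
  have h := fun i => integrable_and_integral_norm_sq_eq_of_fourier_ae_eq (U.grad_mem i)
    (U.fourier_grad_ae_eq i)
  have hnorm : ∀ ξ : Esp N, (2 * Real.pi * ‖ξ‖) ^ 2 * ‖U.fourier ξ‖ ^ 2
      = ∑ i, ‖(2 * Real.pi * Complex.I * (ξ i : ℝ)) * U.fourier ξ‖ ^ 2 := fun ξ => by
    simp only [norm_mul, mul_pow, Complex.norm_real, Complex.norm_I, Complex.norm_ofNat,
      Real.norm_eq_abs, sq_abs, mul_one, ← Finset.sum_mul, ← Finset.mul_sum,
      EuclideanSpace.norm_sq_eq]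
  simp only [hnorm]
  exact ⟨integrable_finsetSum _ fun i _ => (h i).1,
    (Finset.sum_congr rfl fun i _ => (h i).2).trans
      (integral_finsetSum _ fun i _ => (h i).1).symm⟩

lemma integrable_and_Tfun_eq_integral (c : ℝ) (U : H2 N) :
    Integrable (fun ξ => (((2 * Real.pi * ‖ξ‖) ^ 2 - 1) ^ 2 + c) * ‖U.fourier ξ‖ ^ 2) ∧
      Tfun c U = ∫ ξ, (((2 * Real.pi * ‖ξ‖) ^ 2 - 1) ^ 2 + c) * ‖U.fourier ξ‖ ^ 2 := by
  obtain ⟨hlapl, hlaplSq⟩ := U.integrable_and_lapSq_eq_integral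
  obtain ⟨hgrad, hgradSq⟩ := U.integrable_and_gradSq_eq_integral
  have hsplit : ∀ ξ, (((2 * Real.pi * ‖ξ‖) ^ 2 - 1) ^ 2 + c) * ‖U.fourier ξ‖ ^ 2
      = ((2 * Real.pi * ‖ξ‖) ^ 2) ^ 2 * ‖U.fourier ξ‖ ^ 2
        - 2 * ((2 * Real.pi * ‖ξ‖) ^ 2 * ‖U.fourier ξ‖ ^ 2)
        + (1 + c) * ‖U.fourier ξ‖ ^ 2 := fun ξ => by ring
  have hdiff : Integrable fun ξ => ((2 * Real.pi * ‖ξ‖) ^ 2) ^ 2 * ‖U.fourier ξ‖ ^ 2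
      - 2 * ((2 * Real.pi * ‖ξ‖) ^ 2 * ‖U.fourier ξ‖ ^ 2) := hlapl.sub (hgrad.const_mul 2)
  have hmass := U.integrable_norm_fourier_sq.const_mul (1 + c)
  simp only [hsplit]
  refine ⟨hdiff.add hmass, ?_⟩
  rw [integral_add hdiff hmass, integral_sub hlapl (hgrad.const_mul 2), integral_const_mul,
    integral_const_mul, ← hlaplSq, ← hgradSq, ← massSq_eq_integral, Tfun]

lemma mul_massSq_le_Tfun (c : ℝ) (U : H2 N) : c * U.massSq ≤ Tfun c U := by
  obtain ⟨hint, hT⟩ := U.integrable_and_Tfun_eq_integral c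
  rw [hT, massSq_eq_integral, ← integral_const_mul]
  refine integral_mono (U.integrable_norm_fourier_sq.const_mul c) hint fun ξ => ?_
  gcongr
  exact le_add_of_nonneg_left (sq_nonneg _)

lemma mul_lapSq_le_Tfun (c : ℝ) (U : H2 N) :
    c * U.lapSq ≤ (1 + c) * Tfun c U := by
  obtain ⟨hint, hT⟩ := U.integrable_and_Tfun_eq_integral c
  obtain ⟨hlapl, hlaplSq⟩ := U.integrable_and_lapSq_eq_integral
  rw [hT, hlaplSq, ← integral_const_mul, ← integral_const_mul]
  refine integral_mono (hlapl.const_mul c) (hint.const_mul _) fun ξ => ?_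
  have hsymbol : ∀ s : ℝ, c * s ^ 2 ≤ (1 + c) * ((s - 1) ^ 2 + c) := fun s => by
    linarith [sq_nonneg (s - (1 + c))]
  simp only [← mul_assoc]
  exact mul_le_mul_of_nonneg_right (hsymbol _) (sq_nonneg _)

lemma memLp_coord_mul {f : Esp N → ℂ} {p : ℝ≥0∞} (hf : MemLp f p volume)
    (hf' : MemLp (fun ξ => ‖ξ‖ ^ 2 * ‖f ξ‖) p volume) (i : Fin N) :
    MemLp (fun ξ => (2 * Real.pi * Complex.I * (ξ i : ℝ)) * f ξ) p volume := by
  have hmeas : AEStronglyMeasurable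
      (fun ξ => (2 * Real.pi * Complex.I * (ξ i : ℝ)) * f ξ) volume :=
    (Continuous.aestronglyMeasurable (by fun_prop)).mul hf.1
  refine (hf.norm.add hf').of_le_mul (c := 2 * Real.pi) hmeas (.of_forall fun ξ => ?_)
  have hcoord : |ξ i| ≤ 1 + ‖ξ‖ ^ 2 := by
    have := PiLp.norm_apply_le ξ i
    rw [Real.norm_eq_abs] at this
    nlinarith [sq_nonneg (‖ξ‖ - 1)]
  have hnonneg : 0 ≤ ‖f ξ‖ + ‖ξ‖ ^ 2 * ‖f ξ‖ := by positivity
  simp only [norm_mul, Complex.norm_ofNat, Complex.norm_real, Complex.norm_I, Real.norm_eq_abs,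
    abs_of_pos Real.pi_pos, mul_one, Pi.add_apply, abs_of_nonneg hnonneg]
  calc 2 * Real.pi * |ξ i| * ‖f ξ‖ ≤ 2 * Real.pi * (1 + ‖ξ‖ ^ 2) * ‖f ξ‖ := by gcongr
    _ = 2 * Real.pi * (‖f ξ‖ + ‖ξ‖ ^ 2 * ‖f ξ‖) := by ring

lemma memLp_neg_sq_mul {f : Esp N → ℂ} {p : ℝ≥0∞} (hf : AEStronglyMeasurable f volume)
    (hf' : MemLp (fun ξ => ‖ξ‖ ^ 2 * ‖f ξ‖) p volume) :
    MemLp (fun ξ => (-(2 * Real.pi * ‖ξ‖) ^ 2 : ℂ) * f ξ) p volume := by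
  have hmeas : AEStronglyMeasurable
      (fun ξ => (-(2 * Real.pi * ‖ξ‖) ^ 2 : ℂ) * f ξ) volume :=
    (Continuous.aestronglyMeasurable (by fun_prop)).mul hf
  refine hf'.of_le_mul (c := (2 * Real.pi) ^ 2) hmeas (.of_forall fun ξ => le_of_eq ?_)
  simp only [norm_mul, norm_neg, norm_pow, Complex.norm_ofNat, Complex.norm_real,
    Real.norm_eq_abs, abs_norm, abs_of_pos Real.pi_pos]
  ring

/-- The element of `H²(ℝ^N)` with `L²` Fourier transform `f`. -/
def ofFourier (f : Lp ℂ 2 (volume : Measure (Esp N)))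
    (hf : MemLp (fun ξ => ‖ξ‖ ^ 2 * ‖f ξ‖) 2 volume) : H2 N where
  u := (𝓕⁻ f : Lp ℂ 2 (volume : Measure (Esp N)))
  grad i := (𝓕⁻ ((memLp_coord_mul (Lp.memLp f) hf i).toLp _) : Lp ℂ 2 (volume : Measure (Esp N)))
  lapl := (𝓕⁻ ((memLp_neg_sq_mul (Lp.aestronglyMeasurable f) hf).toLp _) :
    Lp ℂ 2 (volume : Measure (Esp N)))
  u_mem := Lp.memLp _
  grad_mem _ := Lp.memLp _
  lapl_mem := Lp.memLp _
  grad_spec i := by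
    rw [isWeakPDeriv_iff_lineDerivOp_eq (Lp.memLp _) (Lp.memLp _), Lp.toLp_coeFn, Lp.toLp_coeFn,
      lineDerivOp_toTemperedDistribution_eq_iff, FourierTransform.fourier_fourierInv_eq,
      FourierTransform.fourier_fourierInv_eq]
    simpa only [EuclideanSpace.inner_single_right, conj_trivial, one_mul, smul_eq_mul]
      using! MemLp.coeFn_toLp _
  lapl_spec := by
    rw [isWeakLap_iff_laplacian_eq (Lp.memLp _) (Lp.memLp _), Lp.toLp_coeFn, Lp.toLp_coeFn,
      laplacian_toTemperedDistribution_eq_iff, FourierTransform.fourier_fourierInv_eq,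
      FourierTransform.fourier_fourierInv_eq]
    exact MemLp.coeFn_toLp _

lemma fourier_ofFourier (f : Lp ℂ 2 (volume : Measure (Esp N)))
    (hf : MemLp (fun ξ => ‖ξ‖ ^ 2 * ‖f ξ‖) 2 volume) : (ofFourier f hf).fourier = f := by
  have h : (ofFourier f hf).u_mem.toLp (ofFourier f hf).u = 𝓕⁻ f := Lp.toLp_coeFn _ _
  rw [fourier, h, FourierTransform.fourier_fourierInv_eq]

instance : SMul ℂ (H2 N) where
  smul a U :=
    { u := fun x => a * U.u x
      grad := fun i x => a * U.grad i x
      lapl := fun x => a * U.lapl x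
      u_mem := U.u_mem.const_mul a
      grad_mem := fun i => (U.grad_mem i).const_mul a
      lapl_mem := U.lapl_mem.const_mul a
      grad_spec := fun i φ hφ => by
        simp only [mul_assoc, integral_const_mul, U.grad_spec i φ hφ, mul_neg]
      lapl_spec := fun φ hφ => by
        simp only [mul_assoc, integral_const_mul, U.lapl_spec φ hφ] }

lemma pPow_smul (σ : ℝ) (a : ℂ) (U : H2 N) :
    (a • U).pPow σ = ‖a‖ ^ (2 * σ + 2) * U.pPow σ := by
  have hnorm : ∀ x, ‖a * U.u x‖ ^ (2 * σ + 2) = ‖a‖ ^ (2 * σ + 2) * ‖U.u x‖ ^ (2 * σ + 2) :=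
    fun x => by rw [norm_mul, Real.mul_rpow (norm_nonneg _) (norm_nonneg _)]
  exact (integral_congr_ae (.of_forall hnorm)).trans (integral_const_mul _ _)

lemma Tfun_smul (c : ℝ) (a : ℂ) (U : H2 N) : Tfun c (a • U) = ‖a‖ ^ 2 * Tfun c U := by
  have hsq : ∀ v : Esp N → ℂ, ∫ x, ‖a * v x‖ ^ 2 = ‖a‖ ^ 2 * ∫ x, ‖v x‖ ^ 2 := fun v => by
    simp only [norm_mul, mul_pow, integral_const_mul]
  have hmass : (a • U).massSq = ‖a‖ ^ 2 * U.massSq := hsq U.u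
  have hlapl : (a • U).lapSq = ‖a‖ ^ 2 * U.lapSq := hsq U.lapl
  have hgrad : (a • U).gradSq = ‖a‖ ^ 2 * U.gradSq :=
    (Finset.sum_congr rfl fun i _ => hsq (U.grad i)).trans (Finset.mul_sum _ _ _).symm
  rw [Tfun, Tfun, hmass, hlapl, hgrad]
  ring

end H2

section BernsteinEmbedding

lemma eLpNorm_le_rpow_mul_eLpNorm_rpow {α F : Type*} [MeasurableSpace α] {μ : Measure α}
    [NormedAddCommGroup F] {g : α → F} {M p q : ℝ≥0∞} (hq : q ≠ 0) (hqp : q ≤ p)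
    (hg_meas : AEStronglyMeasurable g μ) (hg : ∀ᵐ x ∂μ, ‖g x‖ₑ ≤ M) :
    eLpNorm g p μ ≤ M ^ (1 - q.toReal / p.toReal) * eLpNorm g q μ ^ (q.toReal / p.toReal) := by
  rcases eq_or_ne p ⊤ with rfl | hp
  · simpa using! essSup_le_of_ae_le M hg
  have hq_top : q ≠ ⊤ := ne_top_of_le_ne_top hp hqp
  have hp0 : p ≠ 0 := (hq.bot_lt.trans_le hqp).ne'
  have hq_pos := ENNReal.toReal_pos hq hq_top
  have hp_pos := ENNReal.toReal_pos hp0 hp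
  have hsub : 0 ≤ p.toReal - q.toReal := sub_nonneg.2 (ENNReal.toReal_mono hp hqp)
  have hpow : ∫⁻ x, ‖g x‖ₑ ^ p.toReal ∂μ
      ≤ M ^ (p.toReal - q.toReal) * ∫⁻ x, ‖g x‖ₑ ^ q.toReal ∂μ := by
    rw [← lintegral_const_mul'' _ (hg_meas.enorm.pow_const _)]
    refine lintegral_mono_ae (hg.mono fun x hx => ?_)
    calc ‖g x‖ₑ ^ p.toReal
        = ‖g x‖ₑ ^ (p.toReal - q.toReal) * ‖g x‖ₑ ^ q.toReal := by
          rw [← ENNReal.rpow_add_of_nonneg _ _ hsub hq_pos.le, sub_add_cancel]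
      _ ≤ M ^ (p.toReal - q.toReal) * ‖g x‖ₑ ^ q.toReal := by gcongr
  rw [eLpNorm_eq_lintegral_rpow_enorm_toReal hp0 hp,
    eLpNorm_eq_lintegral_rpow_enorm_toReal hq hq_top]
  calc (∫⁻ x, ‖g x‖ₑ ^ p.toReal ∂μ) ^ (1 / p.toReal)
      ≤ (M ^ (p.toReal - q.toReal) * ∫⁻ x, ‖g x‖ₑ ^ q.toReal ∂μ) ^ (1 / p.toReal) := by gcongr
    _ = _ := by
      rw [ENNReal.mul_rpow_of_nonneg _ _ (by positivity), ← ENNReal.rpow_mul, ← ENNReal.rpow_mul]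
      congr 2 <;> field_simp

lemma eLpNorm_le_add_tsum_of_tendsto {α F : Type*} [MeasurableSpace α] {μ : Measure α}
    [NormedAddCommGroup F] {p q : ℝ≥0∞} [Fact (1 ≤ q)] (hp : 1 ≤ p) {u : ℕ → Lp F q μ}
    {v : Lp F q μ} (huv : Tendsto u atTop (𝓝 v)) :
    eLpNorm v p μ ≤ eLpNorm (u 0) p μ + ∑' k, eLpNorm (u (k + 1) - u k : Lp F q μ) p μ := by
  refine eLpNorm_le_of_tendstoInMeasure (.of_forall fun n => ?_)
    (tendstoInMeasure_of_tendsto_Lp huv) fun n => Lp.aestronglyMeasurable _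
  have hpartial : ∀ n, eLpNorm (u n) p μ ≤ eLpNorm (u 0) p μ
      + ∑ k ∈ Finset.range n, eLpNorm (u (k + 1) - u k : Lp F q μ) p μ := fun n => by
    induction n with
    | zero => simp
    | succ n ih =>
      have hstep : u (n + 1) =ᵐ[μ] u n + (u (n + 1) - u n : Lp F q μ) := by
        simpa only [add_sub_cancel] using Lp.coeFn_add (u n) (u (n + 1) - u n)
      rw [eLpNorm_congr_ae hstep, Finset.sum_range_succ, ← add_assoc]
      exact (eLpNorm_add_le (Lp.aestronglyMeasurable _) (Lp.aestronglyMeasurable _) hp).trans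
        (by gcongr)
  exact (hpartial n).trans (by gcongr; exact ENNReal.sum_le_tsum _)

lemma eLpNorm_le_eLpNorm_mul_measure_rpow_of_support_subset {α F : Type*} [MeasurableSpace α]
    {μ : Measure α} [NormedAddCommGroup F] {f : α → F} {s : Set α} {p q : ℝ≥0∞} (hpq : p ≤ q)
    (hf : AEStronglyMeasurable f μ) (hfs : f.support ⊆ s) :
    eLpNorm f p μ ≤ eLpNorm f q μ * μ s ^ (1 / p.toReal - 1 / q.toReal) := by
  simpa only [eLpNorm_restrict_eq_of_support_subset hfs, Measure.restrict_apply_univ] using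
    eLpNorm_le_eLpNorm_mul_rpow_measure_univ hpq (hf.restrict (s := s))

lemma half_sub_one_div_toReal_nonneg {p : ℝ≥0∞} (hp : 2 ≤ p) : 0 ≤ 1 / 2 - 1 / p.toReal := by
  rcases eq_or_ne p ⊤ with rfl | hp_top
  · simp
  · have h2p : 2 ≤ p.toReal := by simpa using ENNReal.toReal_mono hp_top hp
    exact sub_nonneg.2 (one_div_le_one_div_of_le two_pos h2p)

section Cutoff

variable {E F : Type*} [NormedAddCommGroup E] [MeasurableSpace E] {μ : Measure E}
  [NormedAddCommGroup F] {p : ℝ≥0∞}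

lemma eLpNorm_indicator_le_mul_eLpNorm_pow_norm_mul (f : E → F) (m : ℕ) {r : ℝ} (hr : 0 < r)
    {s : Set E} (hs : ∀ ξ ∈ s, r ≤ ‖ξ‖) :
    eLpNorm (s.indicator f) p μ
      ≤ ENNReal.ofReal (r ^ m)⁻¹ * eLpNorm (fun ξ => ‖ξ‖ ^ m * ‖f ξ‖) p μ := by
  refine eLpNorm_le_mul_eLpNorm_of_ae_le_mul (.of_forall fun ξ => ?_) p
  rw [Real.norm_of_nonneg (by positivity)]
  by_cases hξ : ξ ∈ s
  · have hpow : r ^ m ≤ ‖ξ‖ ^ m := pow_le_pow_left₀ hr.le (hs ξ hξ) m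
    rw [Set.indicator_of_mem hξ, ← mul_assoc, inv_mul_eq_div]
    exact le_mul_of_one_le_left (norm_nonneg _) ((one_le_div (by positivity)).2 hpow)
  · rw [Set.indicator_of_notMem hξ, norm_zero]
    positivity

variable [OpensMeasurableSpace E]

/-- The sharp cutoff of `f` to the ball of radius `r` centred at the origin. Applied to a Fourier
transform, it is the low-frequency part in a dyadic decomposition. -/
def ballCutoff (r : ℝ) (f : Lp F p μ) : Lp F p μ :=
  ((Lp.memLp f).indicator (measurableSet_ball (x := 0) (ε := r))).toLp
    ((Metric.ball 0 r).indicator f)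

lemma tendsto_ballCutoff {m : ℕ} [Fact (1 ≤ p)] {f : Lp F p μ} (hm : m ≠ 0)
    (hf : MemLp (fun ξ => ‖ξ‖ ^ m * ‖f ξ‖) p μ) :
    Tendsto (fun r => ballCutoff r f) atTop (𝓝 f) := by
  rw [Lp.tendsto_Lp_iff_tendsto_eLpNorm']
  have hbound : ∀ r : ℝ, 0 < r → eLpNorm (⇑(ballCutoff r f) - ⇑f) p μ
      ≤ ENNReal.ofReal (r ^ m)⁻¹ * eLpNorm (fun ξ => ‖ξ‖ ^ m * ‖f ξ‖) p μ := fun r hr => by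
    have hcompl : ⇑(ballCutoff r f) - ⇑f =ᵐ[μ] -(Metric.ball 0 r)ᶜ.indicator ⇑f := by
      have hcoe : ballCutoff r f =ᵐ[μ] (Metric.ball 0 r).indicator ⇑f := MemLp.coeFn_toLp _
      filter_upwards [hcoe] with ξ hξ
      rw [Pi.sub_apply, hξ, Set.indicator_compl, Pi.neg_apply, Pi.sub_apply, neg_sub]
    rw [eLpNorm_congr_ae hcompl, eLpNorm_neg]
    exact eLpNorm_indicator_le_mul_eLpNorm_pow_norm_mul _ m hr fun ξ hξ => by simpa using hξ
  have hzero : Tendsto (fun r : ℝ => ENNReal.ofReal (r ^ m)⁻¹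
      * eLpNorm (fun ξ => ‖ξ‖ ^ m * ‖f ξ‖) p μ) atTop (𝓝 0) := by
    have h := ENNReal.Tendsto.mul_const (b := eLpNorm (fun ξ => ‖ξ‖ ^ m * ‖f ξ‖) p μ)
      (ENNReal.tendsto_ofReal (tendsto_inv_atTop_zero.comp (tendsto_pow_atTop (α := ℝ) hm)))
      (.inr hf.2.ne)
    simpa only [ENNReal.ofReal_zero, zero_mul] using! h
  exact tendsto_of_tendsto_of_tendsto_of_le_of_le' tendsto_const_nhds hzero
    (.of_forall fun _ => zero_le) ((eventually_gt_atTop 0).mono hbound)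

end Cutoff

variable {E F : Type*} [NormedAddCommGroup E] [InnerProductSpace ℝ E] [FiniteDimensional ℝ E]
  [MeasurableSpace E] [BorelSpace E] [NormedAddCommGroup F] [InnerProductSpace ℂ F]

lemma enorm_fourierInv_le_eLpNorm_one (f : E → F) (x : E) :
    ‖𝓕⁻ f x‖ₑ ≤ eLpNorm f 1 volume := by
  rw [Real.fourierInv_eq, eLpNorm_one_eq_lintegral_enorm]
  refine (enorm_integral_le_lintegral_enorm _).trans_eq (lintegral_congr fun ξ => ?_)
  rw [Circle.smul_def, enorm_smul, ← ofReal_norm, Circle.norm_coe, ENNReal.ofReal_one, one_mul]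

variable [CompleteSpace F]

lemma eLpNorm_two_fourierInv_toLp {f : E → F} (hf : MemLp f 2 volume) :
    eLpNorm (𝓕⁻ (hf.toLp f) : Lp F 2 (volume : Measure E)) 2 volume = eLpNorm f 2 volume := by
  rw [← Lp.enorm_def, ← eLpNorm_congr_ae hf.coeFn_toLp, ← Lp.enorm_def, ← ofReal_norm,
    ← ofReal_norm, ← Lp.norm_fourier_eq, FourierTransform.fourier_fourierInv_eq]

lemma eLpNorm_fourierInv_le_of_support_subset {f : E → F} (hf : MemLp f 2 volume) {s : Set E}
    (hs : volume s ≠ ⊤) (hfs : f.support ⊆ s) {p : ℝ≥0∞} (hp : 2 ≤ p) :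
    eLpNorm (𝓕⁻ (hf.toLp f) : Lp F 2 (volume : Measure E)) p volume
      ≤ volume s ^ (1 / 2 - 1 / p.toReal) * eLpNorm f 2 volume := by
  have hL1 : eLpNorm f 1 volume ≤ eLpNorm f 2 volume * volume s ^ (1 / 2 : ℝ) := by
    have h := eLpNorm_le_eLpNorm_mul_measure_rpow_of_support_subset one_le_two hf.1 hfs
    norm_num at h ⊢
    exact h
  have hint : Integrable f := memLp_one_iff_integrable.1 ⟨hf.1, hL1.trans_lt <|
    ENNReal.mul_lt_top hf.2 (ENNReal.rpow_lt_top_of_nonneg (by norm_num) hs)⟩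
  have hbound : ∀ᵐ x ∂(volume : Measure E),
      ‖(𝓕⁻ (hf.toLp f) : Lp F 2 (volume : Measure E)) x‖ₑ ≤ eLpNorm f 1 volume := by
    filter_upwards [coeFn_fourierInv_ae_eq (hf.toLp f) (hint.congr hf.coeFn_toLp.symm)] with x hx
    rw [hx, ← eLpNorm_congr_ae hf.coeFn_toLp]
    exact enorm_fourierInv_le_eLpNorm_one _ x
  have hθ : 0 ≤ 1 - 2 / p.toReal := by
    linarith [half_sub_one_div_toReal_nonneg hp, mul_one_div 2 p.toReal]
  calc eLpNorm (𝓕⁻ (hf.toLp f) : Lp F 2 (volume : Measure E)) p volume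
      ≤ eLpNorm f 1 volume ^ (1 - 2 / p.toReal) * eLpNorm f 2 volume ^ (2 / p.toReal) := by
        simpa only [eLpNorm_two_fourierInv_toLp, ENNReal.toReal_ofNat] using
          eLpNorm_le_rpow_mul_eLpNorm_rpow two_ne_zero hp (Lp.aestronglyMeasurable _) hbound
    _ ≤ (eLpNorm f 2 volume * volume s ^ (1 / 2 : ℝ)) ^ (1 - 2 / p.toReal)
          * eLpNorm f 2 volume ^ (2 / p.toReal) := by gcongr
    _ = volume s ^ (1 / 2 - 1 / p.toReal)
          * (eLpNorm f 2 volume ^ (1 - 2 / p.toReal) * eLpNorm f 2 volume ^ (2 / p.toReal)) := by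
        rw [ENNReal.mul_rpow_of_nonneg _ _ hθ, ← ENNReal.rpow_mul, mul_comm (_ ^ _) (_ ^ (_ * _)),
          mul_assoc]
        congr 2
        ring
    _ = volume s ^ (1 / 2 - 1 / p.toReal) * eLpNorm f 2 volume := by
        rw [← ENNReal.rpow_add_of_nonneg _ _ hθ (by positivity), sub_add_cancel,
          ENNReal.rpow_one]

variable {p : ℝ≥0∞} (f : Lp F 2 (volume : Measure E))

lemma volume_ball_rpow {r : ℝ} (hr : 0 < r) {θ : ℝ} (hθ : 0 ≤ θ) :
    volume (Metric.ball (0 : E) r) ^ θ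
      = ENNReal.ofReal (r ^ (Module.finrank ℝ E * θ)) * volume (Metric.ball (0 : E) 1) ^ θ := by
  rw [Measure.addHaar_ball_of_pos _ _ hr, ENNReal.mul_rpow_of_nonneg _ _ hθ,
    ENNReal.ofReal_rpow_of_nonneg (by positivity) hθ, Real.rpow_mul hr.le, Real.rpow_natCast]

lemma eLpNorm_fourierInv_ballCutoff_le (hp : 2 ≤ p) {r : ℝ} (hr : 0 < r) :
    eLpNorm (𝓕⁻ (ballCutoff r f) : Lp F 2 (volume : Measure E)) p volume
      ≤ volume (Metric.ball (0 : E) 1) ^ (1 / 2 - 1 / p.toReal)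
        * (ENNReal.ofReal (r ^ (Module.finrank ℝ E * (1 / 2 - 1 / p.toReal))) * ‖f‖ₑ) := by
  have hθ : 0 ≤ 1 / 2 - 1 / p.toReal := half_sub_one_div_toReal_nonneg hp
  refine (eLpNorm_fourierInv_le_of_support_subset _ measure_ball_lt_top.ne
    Set.support_indicator_subset hp).trans ?_
  rw [volume_ball_rpow hr hθ, Lp.enorm_def, mul_comm (ENNReal.ofReal _), mul_assoc]
  gcongr
  exact eLpNorm_indicator_le _

lemma eLpNorm_fourierInv_ballCutoff_sub_le (hp : 2 ≤ p) (m : ℕ) {r s : ℝ} (hr : 0 < r)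
    (hrs : r ≤ s) :
    eLpNorm (𝓕⁻ (ballCutoff s f) - 𝓕⁻ (ballCutoff r f) : Lp F 2 (volume : Measure E)) p volume
      ≤ volume (Metric.ball (0 : E) 1) ^ (1 / 2 - 1 / p.toReal)
        * (ENNReal.ofReal (s ^ (Module.finrank ℝ E * (1 / 2 - 1 / p.toReal)) * (r ^ m)⁻¹)
          * eLpNorm (fun ξ => ‖ξ‖ ^ m * ‖f ξ‖) 2 volume) := by
  have hθ : 0 ≤ 1 / 2 - 1 / p.toReal := half_sub_one_div_toReal_nonneg hp
  have hdiff : ballCutoff s f - ballCutoff r f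
      = (((Lp.memLp f).indicator (measurableSet_ball.diff measurableSet_ball)).toLp
        ((Metric.ball 0 s \ Metric.ball 0 r).indicator f) : Lp F 2 (volume : Measure E)) := by
    rw [ballCutoff, ballCutoff, ← MemLp.toLp_sub]
    simp only [Set.indicator_sdiff (Metric.ball_subset_ball hrs)]
  have hout : ∀ ξ ∈ Metric.ball (0 : E) s \ Metric.ball 0 r, r ≤ ‖ξ‖ := fun ξ hξ => by
    simpa using hξ.2
  have hsub : 𝓕⁻ (ballCutoff s f) - 𝓕⁻ (ballCutoff r f)
      = (𝓕⁻ (ballCutoff s f - ballCutoff r f) : Lp F 2 (volume : Measure E)) :=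
    (map_sub (Lp.fourierTransformₗᵢ E F).symm _ _).symm
  rw [hsub, hdiff]
  calc _ ≤ volume (Metric.ball (0 : E) s) ^ (1 / 2 - 1 / p.toReal)
        * eLpNorm ((Metric.ball 0 s \ Metric.ball 0 r).indicator f) 2 volume :=
        eLpNorm_fourierInv_le_of_support_subset _ measure_ball_lt_top.ne
          (Set.support_indicator_subset.trans Set.sdiff_subset) hp
    _ ≤ volume (Metric.ball (0 : E) s) ^ (1 / 2 - 1 / p.toReal)
        * (ENNReal.ofReal (r ^ m)⁻¹ * eLpNorm (fun ξ => ‖ξ‖ ^ m * ‖f ξ‖) 2 volume) := by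
        gcongr
        exact eLpNorm_indicator_le_mul_eLpNorm_pow_norm_mul _ m hr hout
    _ = _ := by
        rw [volume_ball_rpow (hr.trans_le hrs) hθ, ENNReal.ofReal_mul
          (Real.rpow_nonneg (hr.le.trans hrs) _)]
        ring

lemma two_pow_succ_mul_rpow_mul_inv_pow {R : ℝ} (hR : 0 < R) (b : ℝ) (m k : ℕ) :
    (2 ^ (k + 1) * R) ^ b * ((2 ^ k * R) ^ m)⁻¹ = 2 ^ b * (2 ^ (b - m)) ^ k * R ^ (b - m) := by
  have hpos : 0 < 2 ^ k * R := by positivity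
  calc (2 ^ (k + 1) * R) ^ b * ((2 ^ k * R) ^ m)⁻¹
      = 2 ^ b * ((2 ^ k * R) ^ b / (2 ^ k * R) ^ m) := by
        rw [pow_succ', mul_assoc, Real.mul_rpow two_pos.le hpos.le, mul_assoc, div_eq_mul_inv]
    _ = 2 ^ b * (2 ^ k * R) ^ (b - m) := by rw [Real.rpow_sub_natCast hpos.ne']
    _ = 2 ^ b * (2 ^ (b - m)) ^ k * R ^ (b - m) := by
        rw [Real.mul_rpow (by positivity) hR.le, mul_assoc, ← Real.rpow_natCast,
          ← Real.rpow_natCast, ← Real.rpow_mul two_pos.le, ← Real.rpow_mul two_pos.le,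
          mul_comm (k : ℝ)]

lemma eLpNorm_fourierInv_le (hp : 2 ≤ p) {m : ℕ} (hm : m ≠ 0)
    (hf : MemLp (fun ξ => ‖ξ‖ ^ m * ‖f ξ‖) 2 volume) {R : ℝ} (hR : 0 < R) {b : ℝ}
    (hb : b = Module.finrank ℝ E * (1 / 2 - 1 / p.toReal)) :
    eLpNorm (𝓕⁻ f : Lp F 2 (volume : Measure E)) p volume
      ≤ volume (Metric.ball (0 : E) 1) ^ (1 / 2 - 1 / p.toReal)
        * (ENNReal.ofReal (R ^ b) * ‖f‖ₑ
          + ENNReal.ofReal (2 ^ b) * (1 - ENNReal.ofReal (2 ^ (b - m)))⁻¹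
            * (ENNReal.ofReal (R ^ (b - m)) * eLpNorm (fun ξ => ‖ξ‖ ^ m * ‖f ξ‖) 2 volume)) := by
  subst hb
  set b : ℝ := Module.finrank ℝ E * (1 / 2 - 1 / p.toReal) with hb
  set W : ℝ≥0∞ := volume (Metric.ball (0 : E) 1) ^ (1 / 2 - 1 / p.toReal)
  set ρ : ℝ≥0∞ := ENNReal.ofReal (2 ^ (b - m))
  set M : ℝ≥0∞ := eLpNorm (fun ξ => ‖ξ‖ ^ m * ‖f ξ‖) 2 volume
  have htendsto : Tendsto (fun k : ℕ => (𝓕⁻ (ballCutoff (2 ^ k * R) f) :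
      Lp F 2 (volume : Measure E))) atTop (𝓝 (𝓕⁻ f)) := by
    have hpow : Tendsto (fun k : ℕ => 2 ^ k * R) atTop atTop :=
      (tendsto_pow_atTop_atTop_of_one_lt one_lt_two).atTop_mul_const hR
    exact (ContinuousFourierInv.continuous_fourierInv.tendsto f).comp
      ((tendsto_ballCutoff hm hf).comp hpow)
  have hannulus : ∀ k : ℕ, eLpNorm (𝓕⁻ (ballCutoff (2 ^ (k + 1) * R) f)
      - 𝓕⁻ (ballCutoff (2 ^ k * R) f) : Lp F 2 (volume : Measure E)) p volume
        ≤ W * (ENNReal.ofReal (2 ^ b) * ρ ^ k * (ENNReal.ofReal (R ^ (b - m)) * M)) := fun k => by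
    convert eLpNorm_fourierInv_ballCutoff_sub_le f hp m (show 0 < 2 ^ k * R by positivity)
      (show 2 ^ k * R ≤ 2 ^ (k + 1) * R by gcongr; exacts [one_le_two, k.le_succ]) using 2
    rw [← hb, two_pow_succ_mul_rpow_mul_inv_pow hR, ENNReal.ofReal_mul (by positivity),
      ENNReal.ofReal_mul (by positivity), ENNReal.ofReal_pow (by positivity)]
    ring
  calc eLpNorm (𝓕⁻ f : Lp F 2 (volume : Measure E)) p volume
      ≤ W * (ENNReal.ofReal (R ^ b) * ‖f‖ₑ)
        + ∑' k : ℕ, W * (ENNReal.ofReal (2 ^ b) * ρ ^ k * (ENNReal.ofReal (R ^ (b - m)) * M)) := by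
        refine (eLpNorm_le_add_tsum_of_tendsto (one_le_two.trans hp) htendsto).trans
          (add_le_add ?_ (ENNReal.tsum_le_tsum hannulus))
        simpa only [pow_zero, one_mul] using eLpNorm_fourierInv_ballCutoff_le f hp hR
    _ = _ := by
        rw [ENNReal.tsum_mul_left, ENNReal.tsum_mul_right, ENNReal.tsum_mul_left,
          ENNReal.tsum_geometric, mul_add]

lemma exists_eLpNorm_fourierInv_le (E F : Type*) [NormedAddCommGroup E] [InnerProductSpace ℝ E]
    [FiniteDimensional ℝ E] [MeasurableSpace E] [BorelSpace E] [NormedAddCommGroup F]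
    [InnerProductSpace ℂ F] [CompleteSpace F] (hp : 2 ≤ p) {m : ℕ} {b : ℝ}
    (hb : b = Module.finrank ℝ E * (1 / 2 - 1 / p.toReal)) (hbm : b < m) :
    ∃ C : ℝ≥0∞, C ≠ ⊤ ∧ ∀ f : Lp F 2 (volume : Measure E),
      MemLp (fun ξ => ‖ξ‖ ^ m * ‖f ξ‖) 2 volume → ∀ R : ℝ, 0 < R →
      eLpNorm (𝓕⁻ f : Lp F 2 (volume : Measure E)) p volume ≤ C *
        (ENNReal.ofReal (R ^ b) * ‖f‖ₑ
          + ENNReal.ofReal (R ^ (b - m)) * eLpNorm (fun ξ => ‖ξ‖ ^ m * ‖f ξ‖) 2 volume) := by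
  have hθ : 0 ≤ 1 / 2 - 1 / p.toReal := half_sub_one_div_toReal_nonneg hp
  have hm : m ≠ 0 := by
    rintro rfl
    exact hbm.not_ge (by rw [Nat.cast_zero, hb]; positivity)
  set W : ℝ≥0∞ := volume (Metric.ball (0 : E) 1) ^ (1 / 2 - 1 / p.toReal)
  set K : ℝ≥0∞ := ENNReal.ofReal (2 ^ b) * (1 - ENNReal.ofReal (2 ^ (b - m)))⁻¹
  have hratio : ENNReal.ofReal (2 ^ (b - m)) < 1 := by
    rw [← ENNReal.ofReal_one]
    exact (ENNReal.ofReal_lt_ofReal_iff one_pos).2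
      (Real.rpow_lt_one_of_one_lt_of_neg one_lt_two (sub_neg.2 hbm))
  have hK : K ≠ ⊤ := ENNReal.mul_ne_top ENNReal.ofReal_ne_top
    (ENNReal.inv_ne_top.2 (tsub_pos_of_lt hratio).ne')
  have hW : W ≠ ⊤ := ENNReal.rpow_ne_top_of_nonneg hθ measure_ball_lt_top.ne
  refine ⟨W * (1 + K), by finiteness, fun f hf R hR => ?_⟩
  refine (eLpNorm_fourierInv_le f hp hm hf hR hb).trans ?_
  rw [mul_assoc W, mul_add (1 + K)]
  exact mul_le_mul' le_rfl
    (add_le_add (le_mul_of_one_le_left' le_self_add) (mul_le_mul' le_add_self le_rfl))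

end BernsteinEmbedding

namespace H2

variable {N : ℕ}

lemma enorm_fourier (U : H2 N) : ‖U.fourier‖ₑ = ENNReal.ofReal √U.massSq := by
  rw [massSq, ← eLpNorm_two_eq_ofReal_sqrt U.u_mem, fourier, ← ofReal_norm, Lp.norm_fourier_eq,
    ofReal_norm, Lp.enorm_toLp]

lemma norm_sq_mul_norm_fourier_le (U : H2 N) :
    ∀ᵐ ξ, ‖‖ξ‖ ^ 2 * ‖U.fourier ξ‖‖
      ≤ ‖(𝓕 (U.lapl_mem.toLp U.lapl) : Lp ℂ 2 (volume : Measure (Esp N))) ξ‖ := by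
  filter_upwards [U.fourier_lapl_ae_eq] with ξ hξ
  have hpi : 1 ≤ 2 * Real.pi := by linarith [Real.pi_gt_three]
  have hnorm : ‖(-(2 * Real.pi * ‖ξ‖) ^ 2 : ℂ) * U.fourier ξ‖
      = (2 * Real.pi * ‖ξ‖) ^ 2 * ‖U.fourier ξ‖ := by
    rw [norm_mul, norm_neg]
    norm_num [abs_of_pos Real.pi_pos]
  rw [hξ, hnorm, Real.norm_of_nonneg (by positivity)]
  gcongr
  exact le_mul_of_one_le_left (norm_nonneg ξ) hpi

lemma memLp_norm_sq_mul_norm_fourier (U : H2 N) :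
    MemLp (fun ξ => ‖ξ‖ ^ 2 * ‖U.fourier ξ‖) 2 volume :=
  (Lp.memLp (𝓕 (U.lapl_mem.toLp U.lapl) : Lp ℂ 2 (volume : Measure (Esp N)))).mono
    ((Continuous.aestronglyMeasurable (by fun_prop)).mul (Lp.aestronglyMeasurable _).norm)
    U.norm_sq_mul_norm_fourier_le

lemma eLpNorm_norm_sq_mul_norm_fourier_le (U : H2 N) :
    eLpNorm (fun ξ => ‖ξ‖ ^ 2 * ‖U.fourier ξ‖) 2 volume ≤ ENNReal.ofReal √U.lapSq := by
  refine (eLpNorm_mono_ae U.norm_sq_mul_norm_fourier_le).trans_eq ?_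
  rw [← Lp.enorm_def, ← ofReal_norm, Lp.norm_fourier_eq, ofReal_norm, Lp.enorm_toLp,
    eLpNorm_two_eq_ofReal_sqrt U.lapl_mem, lapSq]

lemma exists_lpNorm_le (N : ℕ) {p : ℝ≥0∞} (hp : 2 ≤ p) {b : ℝ}
    (hb : b = N * (1 / 2 - 1 / p.toReal)) (hb2 : b < 2) :
    ∃ C : ℝ, 0 ≤ C ∧ ∀ (U : H2 N) (R : ℝ), 0 < R →
      lpNorm U.u p volume ≤ C * (R ^ b * √U.massSq + R ^ (b - 2) * √U.lapSq) := by
  obtain ⟨C, hC, hle⟩ := exists_eLpNorm_fourierInv_le (Esp N) ℂ hp (m := 2) (b := b)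
    (by rw [hb, finrank_euclideanSpace_fin]) hb2
  refine ⟨C.toReal, ENNReal.toReal_nonneg, fun U R hR => ?_⟩
  have hu : (𝓕⁻ U.fourier : Lp ℂ 2 (volume : Measure (Esp N))) =ᵐ[volume] U.u := by
    rw [fourier, FourierTransform.fourierInv_fourier_eq]
    exact U.u_mem.coeFn_toLp
  rw [← toReal_eLpNorm U.u_mem.1]
  refine ENNReal.toReal_le_of_le_ofReal (by positivity) ?_
  calc eLpNorm U.u p volume
      = eLpNorm (𝓕⁻ U.fourier : Lp ℂ 2 (volume : Measure (Esp N))) p volume :=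
        (eLpNorm_congr_ae hu).symm
    _ ≤ C * (ENNReal.ofReal (R ^ b) * ENNReal.ofReal √U.massSq
          + ENNReal.ofReal (R ^ (b - 2)) * ENNReal.ofReal √U.lapSq) := by
        refine (hle _ U.memLp_norm_sq_mul_norm_fourier R hR).trans ?_
        rw [U.enorm_fourier, Nat.cast_ofNat]
        gcongr
        exact U.eLpNorm_norm_sq_mul_norm_fourier_le
    _ = ENNReal.ofReal (C.toReal * (R ^ b * √U.massSq + R ^ (b - 2) * √U.lapSq)) := by
        rw [ENNReal.ofReal_mul ENNReal.toReal_nonneg, ENNReal.ofReal_toReal hC,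
          ENNReal.ofReal_add (by positivity) (by positivity), ENNReal.ofReal_mul (by positivity),
          ENNReal.ofReal_mul (by positivity)]

lemma massSq_nonneg (U : H2 N) : 0 ≤ U.massSq :=
  integral_nonneg fun x => by positivity

lemma lpNorm_eq_one_of_pPow_eq_one {σ : ℝ} (hσ : 0 < σ) {U : H2 N} (hU : U.pPow σ = 1) :
    lpNorm U.u (ENNReal.ofReal (2 * σ + 2)) volume = 1 := by
  have hp : 0 < 2 * σ + 2 := by positivity
  rw [pPow, integral_norm_rpow_eq_lpNorm_rpow U.u_mem.1 hp] at hU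
  exact (Real.rpow_left_inj lpNorm_nonneg zero_le_one hp.ne').1 (hU.trans (Real.one_rpow _).symm)

lemma exists_pos_le_massSq {σ : ℝ} (hσ : 0 < σ) (hNσ : N * σ < 4 * (σ + 1)) (Λ : ℝ) :
    ∃ m > 0, ∀ U : H2 N, U.pPow σ = 1 → U.lapSq ≤ Λ → m ≤ U.massSq := by
  obtain ⟨b, hb⟩ : ∃ b : ℝ, b = N * (1 / 2 - 1 / (2 * σ + 2)) := ⟨_, rfl⟩
  have hb2 : b < 2 := by
    have hb' : b = N * σ / (2 * (σ + 1)) := by rw [hb]; field_simp; ring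
    rw [hb', div_lt_iff₀ (by positivity)]
    linarith
  obtain ⟨C, hC, hle⟩ := exists_lpNorm_le N (p := ENNReal.ofReal (2 * σ + 2))
    (ENNReal.ofReal_ofNat 2 ▸ ENNReal.ofReal_le_ofReal (by linarith))
    (by rw [hb, ENNReal.toReal_ofReal (by positivity)]) hb2
  obtain ⟨R, hR, hhigh⟩ : ∃ R : ℝ, 0 < R ∧ C * (R ^ (b - 2) * √Λ) < 1 / 2 := by
    have hlim : Tendsto (fun R : ℝ => C * (R ^ (b - 2) * √Λ)) atTop (𝓝 0) := by
      simpa using ((tendsto_rpow_neg_atTop (sub_pos.2 hb2)).mul_const √Λ).const_mul C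
    exact ((eventually_gt_atTop 0).and (hlim.eventually_lt_const one_half_pos)).exists
  refine ⟨(1 / (2 * (C * R ^ b + 1))) ^ 2, by positivity, fun U hU hlap => ?_⟩
  have hone : 1 ≤ C * (R ^ b * √U.massSq) + C * (R ^ (b - 2) * √Λ) := by
    rw [← lpNorm_eq_one_of_pPow_eq_one hσ hU, ← mul_add]
    exact (hle U R hR).trans (by gcongr)
  rw [← Real.le_sqrt (by positivity) U.massSq_nonneg,
    div_le_iff₀ (by positivity)]
  linarith [Real.sqrt_nonneg U.massSq]

end H2

lemma volume_real_div_two_le_norm_fourierInv_indicator_one {E : Type*} [NormedAddCommGroup E]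
    [InnerProductSpace ℝ E] [FiniteDimensional ℝ E] [MeasurableSpace E] [BorelSpace E] {S : Set E}
    (hS : MeasurableSet S) (hS_fin : volume S ≠ ⊤) {x : E}
    (hx : ∀ ξ ∈ S, |2 * Real.pi * inner ℝ ξ x| ≤ 1) :
    volume.real S / 2 ≤ ‖𝓕⁻ (S.indicator 1 : E → ℂ) x‖ := by
  set e : E → ℂ := fun ξ => Complex.exp (↑(2 * Real.pi * inner ℝ ξ x) * Complex.I)
  have he : IntegrableOn e S :=
    (integrableOn_const (C := (1 : ℝ)) hS_fin).mono' (Continuous.aestronglyMeasurable (by fun_prop))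
      (.of_forall fun ξ => (Complex.norm_exp_ofReal_mul_I _).le)
  have hfourier : 𝓕⁻ (S.indicator 1 : E → ℂ) x = ∫ ξ in S, e ξ := by
    rw [Real.fourierInv_eq', ← integral_indicator hS]
    congr with ξ
    by_cases hξ : ξ ∈ S <;> simp [hξ, e]
  have hre : ∀ ξ ∈ S, 1 / 2 ≤ (e ξ).re := fun ξ hξ => by
    have hcos := Real.one_sub_sq_div_two_le_cos (x := 2 * Real.pi * inner ℝ ξ x)
    have hsq := (sq_le_one_iff_abs_le_one _).2 (hx ξ hξ)
    rw [Complex.exp_ofReal_mul_I_re]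
    linarith
  calc volume.real S / 2 = 1 / 2 * volume.real S := by ring
    _ ≤ ∫ ξ in S, (e ξ).re := setIntegral_ge_of_const_le_real hS hS_fin hre he.re
    _ = (𝓕⁻ (S.indicator 1 : E → ℂ) x).re := by rw [hfourier]; exact integral_re he
    _ ≤ ‖𝓕⁻ (S.indicator 1 : E → ℂ) x‖ := Complex.re_le_norm _

namespace H2

variable {N : ℕ}

lemma memLp_norm_sq_mul_indicatorConstLp {S : Set (Esp N)} (hS : MeasurableSet S)
    (hSb : Bornology.IsBounded S) :
    MemLp (fun ξ => ‖ξ‖ ^ 2 * ‖indicatorConstLp (μ := volume) 2 hS hSb.measure_lt_top.ne (1 : ℂ) ξ‖)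
      2 volume := by
  obtain ⟨R, hR⟩ := hSb.subset_closedBall 0
  have hsq : Continuous fun ξ : Esp N => ‖ξ‖ ^ 2 := by fun_prop
  refine (Lp.memLp (indicatorConstLp 2 hS hSb.measure_lt_top.ne (1 : ℂ))).of_le_mul (c := R ^ 2)
    (hsq.aestronglyMeasurable.mul (Lp.aestronglyMeasurable _).norm) ?_
  filter_upwards [indicatorConstLp_coeFn (p := 2) (hs := hS) (hμs := hSb.measure_lt_top.ne)
    (c := (1 : ℂ))] with ξ hξ
  rw [hξ]
  by_cases hξS : ξ ∈ S
  · have := mem_closedBall_zero_iff.1 (hR hξS)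
    simp only [norm_mul, norm_pow, norm_norm]
    gcongr
  · simp [hξS]

/-- The function `𝓕⁻ 1_S`, used as a trial function whose frequencies lie in `S`. -/
def bandLimited (S : Set (Esp N)) (hS : MeasurableSet S) (hSb : Bornology.IsBounded S) : H2 N :=
  ofFourier (indicatorConstLp 2 hS hSb.measure_lt_top.ne (1 : ℂ))
    (memLp_norm_sq_mul_indicatorConstLp hS hSb)

variable {S : Set (Esp N)} (hS : MeasurableSet S) (hSb : Bornology.IsBounded S)

lemma fourier_bandLimited_ae_eq :
    (bandLimited S hS hSb).fourier =ᵐ[volume] S.indicator fun _ => 1 := by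
  rw [bandLimited, fourier_ofFourier]
  exact indicatorConstLp_coeFn

lemma bandLimited_ae_eq :
    (bandLimited S hS hSb).u =ᵐ[volume] 𝓕⁻ (S.indicator 1 : Esp N → ℂ) := by
  have hint : Integrable (S.indicator 1 : Esp N → ℂ) :=
    (integrable_indicator_iff hS).2 (integrableOn_const hSb.measure_lt_top.ne)
  have hcoe : indicatorConstLp 2 hS hSb.measure_lt_top.ne (1 : ℂ) =ᵐ[volume]
    S.indicator 1 := indicatorConstLp_coeFn
  refine (coeFn_fourierInv_ae_eq _ (hint.congr hcoe.symm)).trans (.of_forall fun x => ?_)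
  exact Real.fourierInv_congr_ae hcoe x

lemma memLp_bandLimited {p : ℝ≥0∞} (hp : 2 ≤ p) : MemLp (bandLimited S hS hSb).u p volume := by
  refine ⟨(bandLimited S hS hSb).u_mem.1, ?_⟩
  refine (eLpNorm_fourierInv_le_of_support_subset (memLp_indicator_const 2 hS (1 : ℂ)
    (.inr hSb.measure_lt_top.ne)) hSb.measure_lt_top.ne Set.support_indicator_subset hp).trans_lt ?_
  exact ENNReal.mul_lt_top (ENNReal.rpow_lt_top_of_nonneg (half_sub_one_div_toReal_nonneg hp)
    hSb.measure_lt_top.ne) (memLp_indicator_const 2 hS (1 : ℂ) (.inr hSb.measure_lt_top.ne)).2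

lemma Tfun_bandLimited_le {c η : ℝ} (hη : ∀ ξ ∈ S, ((2 * Real.pi * ‖ξ‖) ^ 2 - 1) ^ 2 ≤ η) :
    Tfun c (bandLimited S hS hSb) ≤ (η + c) * volume.real S := by
  obtain ⟨hint, hT⟩ := integrable_and_Tfun_eq_integral c (bandLimited S hS hSb)
  have hconst : Integrable (S.indicator fun _ : Esp N => η + c) :=
    (integrable_indicator_iff hS).2 (integrableOn_const hSb.measure_lt_top.ne)
  calc Tfun c (bandLimited S hS hSb) ≤ ∫ ξ, S.indicator (fun _ => η + c) ξ := by
        rw [hT]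
        refine integral_mono_ae hint hconst ?_
        filter_upwards [fourier_bandLimited_ae_eq hS hSb] with ξ hξ
        by_cases hξS : ξ ∈ S
        · simpa [hξ, hξS] using hη ξ hξS
        · simp [hξ, hξS]
    _ = (η + c) * volume.real S := by
        rw [integral_indicator hS, setIntegral_const, smul_eq_mul, mul_comm]

lemma le_pPow_bandLimited {σ : ℝ} (hσ : 0 < σ) {B : Set (Esp N)} (hB : MeasurableSet B)
    (hB_fin : volume B ≠ ⊤) (hSB : ∀ ξ ∈ S, ∀ x ∈ B, |2 * Real.pi * inner ℝ ξ x| ≤ 1) :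
    (volume.real S / 2) ^ (2 * σ + 2) * volume.real B ≤ (bandLimited S hS hSb).pPow σ := by
  have hint : Integrable fun x => ‖(bandLimited S hS hSb).u x‖ ^ (2 * σ + 2) := by
    have hp : 0 < 2 * σ + 2 := by positivity
    have h := (memLp_bandLimited hS hSb (p := ENNReal.ofReal (2 * σ + 2))
      (ENNReal.ofReal_ofNat 2 ▸ ENNReal.ofReal_le_ofReal (by linarith))).integrable_norm_rpow
      (ENNReal.ofReal_pos.2 hp).ne' ENNReal.ofReal_ne_top
    rwa [ENNReal.toReal_ofReal hp.le] at h
  have hlower : ∀ᵐ x, x ∈ B →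
      (volume.real S / 2) ^ (2 * σ + 2) ≤ ‖(bandLimited S hS hSb).u x‖ ^ (2 * σ + 2) := by
    filter_upwards [bandLimited_ae_eq hS hSb] with x hx hxB
    rw [hx]
    gcongr
    exact volume_real_div_two_le_norm_fourierInv_indicator_one hS hSb.measure_lt_top.ne
      fun ξ hξ => hSB ξ hξ x hxB
  calc (volume.real S / 2) ^ (2 * σ + 2) * volume.real B
      = ∫ _ in B, (volume.real S / 2) ^ (2 * σ + 2) := by
        rw [setIntegral_const, smul_eq_mul, mul_comm]
    _ ≤ ∫ x in B, ‖(bandLimited S hS hSb).u x‖ ^ (2 * σ + 2) :=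
        setIntegral_mono_on_ae (integrableOn_const hB_fin) hint.integrableOn hB hlower
    _ ≤ (bandLimited S hS hSb).pPow σ :=
        setIntegral_le_integral hint (.of_forall fun x => by positivity)

end H2

lemma mul_measureReal_ball_le_measureReal_closedBall_diff_ball {E : Type*} [NormedAddCommGroup E]
    [NormedSpace ℝ E] [FiniteDimensional ℝ E] [Nontrivial E] [MeasurableSpace E] [BorelSpace E]
    (μ : Measure E) [μ.IsAddHaarMeasure] {δ : ℝ} (hδ : 0 ≤ δ) {r : ℝ} (hr : 0 ≤ r) :
    δ * μ.real (Metric.ball 0 r)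
      ≤ μ.real (Metric.closedBall 0 ((1 + δ) * r) \ Metric.ball 0 r) := by
  have hsub : Metric.ball (0 : E) r ⊆ Metric.closedBall 0 ((1 + δ) * r) :=
    Metric.ball_subset_closedBall.trans (Metric.closedBall_subset_closedBall (by nlinarith))
  have hscale : μ.real (Metric.closedBall (0 : E) ((1 + δ) * r))
      = (1 + δ) ^ Module.finrank ℝ E * μ.real (Metric.ball 0 r) := by
    rw [Measure.real, Measure.addHaar_closedBall_mul μ 0 (by positivity) hr,
      Measure.addHaar_closedBall_eq_addHaar_ball, ENNReal.toReal_mul,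
      ENNReal.toReal_ofReal (by positivity), Measure.real]
  have hbernoulli : 1 + δ ≤ (1 + δ) ^ Module.finrank ℝ E :=
    le_self_pow₀ (by linarith) Module.finrank_pos.ne'
  rw [measureReal_sdiff hsub measurableSet_ball measure_closedBall_lt_top.ne, hscale]
  nlinarith [measureReal_nonneg (μ := μ) (s := Metric.ball (0 : E) r)]

lemma sq_sub_one_sq_le {t δ : ℝ} (ht : 1 ≤ t) (htδ : t ≤ 1 + δ) (hδ : δ ≤ 1) :
    (t ^ 2 - 1) ^ 2 ≤ 9 * δ ^ 2 := by
  have h : t ^ 2 - 1 ≤ 3 * δ := by nlinarith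
  calc (t ^ 2 - 1) ^ 2 ≤ (3 * δ) ^ 2 := pow_le_pow_left₀ (by nlinarith) h 2
    _ = 9 * δ ^ 2 := by ring

namespace H2

variable {N : ℕ} {σ c : ℝ}

lemma Tfun_nonneg (hc : 0 ≤ c) (U : H2 N) : 0 ≤ Tfun c U :=
  (mul_nonneg hc U.massSq_nonneg).trans (mul_massSq_le_Tfun c U)

lemma exists_pPow_eq_one_and_rpow_mul_Tfun_eq (hσ : 0 < σ) {U : H2 N} (hU : 0 < U.pPow σ) (c : ℝ) :
    ∃ V : H2 N, V.pPow σ = 1 ∧ U.pPow σ ^ (1 / (σ + 1)) * Tfun c V = Tfun c U := by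
  set a : ℝ := U.pPow σ ^ (-(1 / (2 * σ + 2)))
  have ha : ‖(a : ℂ)‖ = a := Complex.norm_of_nonneg (by positivity)
  have hpow : a ^ (2 * σ + 2) * U.pPow σ = 1 := by
    rw [← Real.rpow_mul hU.le, neg_mul, one_div_mul_cancel (by positivity), Real.rpow_neg_one,
      inv_mul_cancel₀ hU.ne']
  have hsq : U.pPow σ ^ (1 / (σ + 1)) * a ^ 2 = 1 := by
    rw [← Real.rpow_natCast, ← Real.rpow_mul hU.le, ← Real.rpow_add hU]
    convert Real.rpow_zero _
    push_cast
    field_simp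
    ring
  refine ⟨(a : ℂ) • U, by rw [pPow_smul, ha, hpow], ?_⟩
  rw [Tfun_smul, ha, ← mul_assoc, hsq, one_mul]

/-- The closed spherical shell of frequencies just outside the sphere `2π‖ξ‖ = 1` on which the
symbol `((2π‖ξ‖)² - 1)²` of `T_0` vanishes. -/
def shell (N : ℕ) (δ : ℝ) : Set (Esp N) := {ξ | 2 * Real.pi * ‖ξ‖ ∈ Set.Icc 1 (1 + δ)}

lemma shell_eq_closedBall_diff_ball (N : ℕ) (δ : ℝ) : shell N δ
    = Metric.closedBall 0 ((1 + δ) * (2 * Real.pi)⁻¹) \ Metric.ball 0 (2 * Real.pi)⁻¹ := by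
  have hpi : 0 < 2 * Real.pi := by positivity
  ext ξ
  rw [shell, Set.mem_ofPred_eq, Set.mem_Icc, Set.mem_sdiff, mem_closedBall_zero_iff,
    mem_ball_zero_iff, not_lt, ← div_eq_mul_inv, le_div_iff₀' hpi, inv_le_iff_one_le_mul₀' hpi,
    and_comm]

lemma measurableSet_shell (N : ℕ) (δ : ℝ) : MeasurableSet (shell N δ) := by
  rw [shell_eq_closedBall_diff_ball]
  exact measurableSet_closedBall.diff measurableSet_ball

lemma isBounded_shell (N : ℕ) (δ : ℝ) : Bornology.IsBounded (shell N δ) := by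
  rw [shell_eq_closedBall_diff_ball]
  exact Metric.isBounded_closedBall.subset Set.sdiff_subset

/-- The function `𝓕⁻ 1_S` for the shell `S` of thickness `δ`, a trial function for `t(δ²)`. -/
def shellTrial (N : ℕ) (δ : ℝ) : H2 N :=
  bandLimited (shell N δ) (measurableSet_shell N δ) (isBounded_shell N δ)

lemma Tfun_shellTrial_le {δ : ℝ} (hδ : δ ≤ 1) :
    Tfun c (shellTrial N δ) ≤ (9 * δ ^ 2 + c) * volume.real (shell N δ) :=
  Tfun_bandLimited_le _ _ fun _ hξ => sq_sub_one_sq_le hξ.1 hξ.2 hδ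

lemma le_pPow_shellTrial (hσ : 0 < σ) {δ : ℝ} (hδ : δ ≤ 1) :
    (volume.real (shell N δ) / 2) ^ (2 * σ + 2)
      * volume.real (Metric.closedBall (0 : Esp N) (1 / 2)) ≤ (shellTrial N δ).pPow σ := by
  refine le_pPow_bandLimited _ _ hσ measurableSet_closedBall measure_closedBall_lt_top.ne
    fun ξ hξ x hx => ?_
  rw [abs_mul, abs_of_pos Real.two_pi_pos]
  calc 2 * Real.pi * |inner ℝ ξ x| ≤ 2 * Real.pi * (‖ξ‖ * ‖x‖) := by
        gcongr
        exact abs_real_inner_le_norm ξ x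
    _ = 2 * Real.pi * ‖ξ‖ * ‖x‖ := by ring
    _ ≤ 2 * (1 / 2) := by
        gcongr
        · exact hξ.2.trans (by linarith)
        · exact mem_closedBall_zero_iff.1 hx
    _ = 1 := by norm_num

lemma le_rpow_pPow_shellTrial (hσ : 0 < σ) {δ : ℝ} (hδ : δ ≤ 1) :
    (volume.real (shell N δ) / 2) ^ 2
        * volume.real (Metric.closedBall (0 : Esp N) (1 / 2)) ^ (1 / (σ + 1))
      ≤ (shellTrial N δ).pPow σ ^ (1 / (σ + 1)) := by
  have hexp : (volume.real (shell N δ) / 2) ^ 2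
      = ((volume.real (shell N δ) / 2) ^ (2 * σ + 2)) ^ (1 / (σ + 1)) := by
    rw [← Real.rpow_mul (by positivity), ← Real.rpow_natCast]
    congr 1
    push_cast
    field_simp
  rw [hexp, ← Real.mul_rpow (by positivity) (by positivity)]
  gcongr
  exact le_pPow_shellTrial hσ hδ

lemma exists_pPow_eq_one_and_Tfun_sq_le (hN : 1 ≤ N) (hσ : 0 < σ) :
    ∃ C > 0, ∀ δ : ℝ, 0 < δ → δ ≤ 1 → ∃ U : H2 N, U.pPow σ = 1 ∧ Tfun (δ ^ 2) U ≤ C * δ := by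
  have : Nonempty (Fin N) := Fin.pos_iff_nonempty.1 hN
  set κ := volume.real (Metric.ball (0 : Esp N) (2 * Real.pi)⁻¹)
  set β := volume.real (Metric.closedBall (0 : Esp N) (1 / 2))
  have hκ : 0 < κ := ENNReal.toReal_pos
    (Metric.measure_ball_pos _ _ (by positivity)).ne' measure_ball_lt_top.ne
  have hβ : 0 < β := ENNReal.toReal_pos
    (Metric.measure_closedBall_pos _ _ one_half_pos).ne' measure_closedBall_lt_top.ne
  refine ⟨40 / (κ * β ^ (1 / (σ + 1))), by positivity, fun δ hδ hδ1 => ?_⟩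
  set v := volume.real (shell N δ)
  have hκv : δ * κ ≤ v := (mul_measureReal_ball_le_measureReal_closedBall_diff_ball volume hδ.le
    (by positivity)).trans_eq (by rw [← shell_eq_closedBall_diff_ball])
  have hv : 0 < v := lt_of_lt_of_le (by positivity) hκv
  have hP : 0 < (shellTrial N δ).pPow σ :=
    lt_of_lt_of_le (by positivity) (le_pPow_shellTrial hσ hδ1)
  obtain ⟨U, hU, hUT⟩ := exists_pPow_eq_one_and_rpow_mul_Tfun_eq hσ hP (δ ^ 2)
  refine ⟨U, hU, ?_⟩
  have hT : 0 ≤ Tfun (δ ^ 2) U := U.Tfun_nonneg (sq_nonneg δ)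
  rw [div_mul_eq_mul_div, le_div_iff₀ (by positivity)]
  refine le_of_mul_le_mul_left ?_ (by positivity : 0 < δ * v)
  calc δ * v * (Tfun (δ ^ 2) U * (κ * β ^ (1 / (σ + 1))))
      = δ * κ * v * β ^ (1 / (σ + 1)) * Tfun (δ ^ 2) U := by ring
    _ ≤ v * v * β ^ (1 / (σ + 1)) * Tfun (δ ^ 2) U := by gcongr
    _ = 4 * ((v / 2) ^ 2 * β ^ (1 / (σ + 1)) * Tfun (δ ^ 2) U) := by ring
    _ ≤ 4 * Tfun (δ ^ 2) (shellTrial N δ) := by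
        rw [← hUT]
        gcongr
        exact le_rpow_pPow_shellTrial hσ hδ1
    _ ≤ 4 * ((9 * δ ^ 2 + δ ^ 2) * v) := by gcongr; exact Tfun_shellTrial_le hδ1
    _ = δ * v * (40 * δ) := by ring

end H2

section Tmin

variable {N : ℕ} {σ c : ℝ}

lemma tmin_nonneg (N : ℕ) (σ : ℝ) (hc : 0 ≤ c) : 0 ≤ tmin N σ c :=
  Real.sInf_nonneg (by rintro _ ⟨U, -, rfl⟩; exact U.Tfun_nonneg hc)

lemma tmin_le_Tfun (hc : 0 ≤ c) {U : H2 N} (hU : U.pPow σ = 1) : tmin N σ c ≤ Tfun c U :=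
  csInf_le ⟨0, by rintro _ ⟨V, -, rfl⟩; exact V.Tfun_nonneg hc⟩ ⟨U, hU, rfl⟩

lemma exists_tmin_sq_le (hN : 1 ≤ N) (hσ : 0 < σ) :
    ∃ C > 0, ∀ δ : ℝ, 0 < δ → δ ≤ 1 → tmin N σ (δ ^ 2) ≤ C * δ := by
  obtain ⟨C, hC, hCT⟩ := H2.exists_pPow_eq_one_and_Tfun_sq_le hN hσ
  refine ⟨C, hC, fun δ hδ hδ1 => ?_⟩
  obtain ⟨U, hU, hUT⟩ := hCT δ hδ hδ1
  exact (tmin_le_Tfun (sq_nonneg δ) hU).trans hUT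

lemma exists_Tfun_lt_tmin_add (hN : 1 ≤ N) (hσ : 0 < σ) (c : ℝ) {ε : ℝ} (hε : 0 < ε) :
    ∃ U : H2 N, U.pPow σ = 1 ∧ Tfun c U < tmin N σ c + ε := by
  obtain ⟨C, -, hC⟩ := H2.exists_pPow_eq_one_and_Tfun_sq_le hN hσ
  obtain ⟨U₀, hU₀, -⟩ := hC 1 one_pos le_rfl
  have hne : {r | ∃ U : H2 N, U.pPow σ = 1 ∧ r = Tfun c U}.Nonempty := ⟨_, U₀, hU₀, rfl⟩
  obtain ⟨_, ⟨U, hU, rfl⟩, hlt⟩ := exists_lt_of_csInf_lt hne (lt_add_of_pos_right (tmin N σ c) hε)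
  exact ⟨U, hU, hlt⟩

lemma strictMonoOn_tmin (hN : 1 ≤ N) (hσ : 0 < σ) (hNσ : N * σ < 4 * (σ + 1)) :
    StrictMonoOn (tmin N σ) (Set.Ioi 0) := by
  intro c hc d hd hcd
  rw [Set.mem_Ioi] at hc hd
  obtain ⟨m, hm, hmass⟩ :=
    H2.exists_pos_le_massSq (N := N) hσ hNσ ((1 + d) * (tmin N σ d + 1) / d)
  have hgap : 0 < min 1 ((d - c) * m) := lt_min one_pos (mul_pos (sub_pos.2 hcd) hm)
  obtain ⟨U, hU, hlt⟩ := exists_Tfun_lt_tmin_add hN hσ d hgap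
  have hlap : U.lapSq ≤ (1 + d) * (tmin N σ d + 1) / d := by
    rw [le_div_iff₀' hd]
    refine (U.mul_lapSq_le_Tfun d).trans ?_
    gcongr
    exact hlt.le.trans (by gcongr; exact min_le_left _ _)
  calc tmin N σ c ≤ Tfun c U := tmin_le_Tfun hc.le hU
    _ = Tfun d U - (d - c) * U.massSq := by rw [Tfun, Tfun]; ring
    _ ≤ Tfun d U - min 1 ((d - c) * m) := by
        gcongr
        exact (min_le_right _ _).trans
          (mul_le_mul_of_nonneg_left (hmass U hU hlap) (sub_nonneg.2 hcd.le))
    _ < tmin N σ d := sub_lt_iff_lt_add.2 hlt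

lemma mul_lt_four_mul_add_one_of_subcritical
    (hσ : (N ≤ 4 ∧ 0 < σ) ∨ (5 ≤ N ∧ 0 < σ ∧ σ < 4 / ((N : ℝ) - 4))) : N * σ < 4 * (σ + 1) := by
  rcases hσ with ⟨hN, hσ⟩ | ⟨hN, -, hσ⟩
  · have : (N : ℝ) ≤ 4 := by exact_mod_cast hN
    nlinarith
  · have : (5 : ℝ) ≤ N := by exact_mod_cast hN
    rw [lt_div_iff₀ (by linarith)] at hσ
    linarith

end Tmin

/-- `c ↦ t(c)` is strictly increasing on `(0,∞)`, `t(c) ≤ C√c` for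
small `c`, and `t(c) → 0` as `c → 0⁺`. -/
theorem stmt12 (N : ℕ) (σ : ℝ) (hN : 1 ≤ N)
    (hσ : ((N ≤ 4 ∧ 0 < σ) ∨ (5 ≤ N ∧ 0 < σ ∧ σ < 4 / ((N : ℝ) - 4)))) :
    StrictMonoOn (fun c => tmin N σ c) (Set.Ioi (0 : ℝ)) ∧
    (∃ C : ℝ, 0 < C ∧ ∃ δ : ℝ, 0 < δ ∧ ∀ c : ℝ, 0 < c → c < δ →
      tmin N σ c ≤ C * Real.sqrt c) ∧
    Tendsto (fun c => tmin N σ c) (nhdsWithin 0 (Set.Ioi 0)) (nhds 0) := by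
  have hσ₀ : 0 < σ := hσ.elim And.right fun h => h.2.1
  obtain ⟨C, hC, htC⟩ := exists_tmin_sq_le hN hσ₀
  have hbound : ∀ c : ℝ, 0 < c → c < 1 → tmin N σ c ≤ C * √c := fun c hc hc1 => by
    simpa only [Real.sq_sqrt hc.le] using htC √c (Real.sqrt_pos.2 hc) (Real.sqrt_le_one.2 hc1.le)
  have hlim : Tendsto (fun c : ℝ => C * √c) (𝓝[>] 0) (𝓝 0) :=
    (Continuous.tendsto' (by fun_prop) 0 0 (by simp)).mono_left nhdsWithin_le_nhds
  refine ⟨strictMonoOn_tmin hN hσ₀ (mul_lt_four_mul_add_one_of_subcritical hσ),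
    ⟨C, hC, 1, one_pos, hbound⟩,
    tendsto_of_tendsto_of_tendsto_of_le_of_le' tendsto_const_nhds hlim ?_ ?_⟩
  · filter_upwards [self_mem_nhdsWithin] with c hc using tmin_nonneg N σ (le_of_lt hc)
  · filter_upwards [Ioo_mem_nhdsGT one_pos] with c hc using hbound c hc.1 hc.2

end
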